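/- arXiv:2506.09019 — 2 statements merged into one kernel-verified Lean document; each statement's English description precedes it below -/
import Mathlib

section
/- Let k be a field of characteristic 3 and d ≥ 2. Then there exist real numbers L_R and L_S such that the sequence e ↦ dim_k( k[x_0,…,x_d]/(x_0^{3^e},…,x_d^{3^e}, x_0² + x_1² + ⋯ + x_d²) ) / 3^{d·e} converges to L_R, the sequence e ↦ dim_k( k[x_0,…,x_d]/(x_0^{3^e},…,x_d^{3^e}, x_0² + ⋯ + x_{d−1}² + x_d³) ) / 3^{d·e} converges to L_S, and L_S > L_R. That is, e_HK(S_{3,d}) > e_HK(R_{3,d}): the Hilbert–Kunz multiplicity distinguishes the A_1 and A_2 singularities in characteristic 3. -/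
open MvPolynomial

/-- The Hilbert–Kunz function of the hypersurface defined by `f` in `n` variables,
in characteristic `p`, at level `e`. -/
noncomputable def HKfun (k : Type*) [Field k] (n p e : ℕ)
    (f : MvPolynomial (Fin n) k) : ℕ :=
  Module.finrank k
    (MvPolynomial (Fin n) k ⧸
      Ideal.span
        (Set.range (fun i : Fin n => (X i : MvPolynomial (Fin n) k) ^ p ^ e) ∪ {f}))

set_option linter.unusedSectionVars false

namespace HKA

section expand
variable {k : Type*} [Field k] {n : ℕ}

noncomputable def Er (k : Type*) [Field k] {n : ℕ} (r : Fin n → ℕ) :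
    MvPolynomial (Fin n) k →ₐ[k] MvPolynomial (Fin n) k :=
  aeval (fun i => X i ^ r i)

noncomputable def mulr (r : Fin n → ℕ) (δ : Fin n →₀ ℕ) : Fin n →₀ ℕ :=
  Finsupp.equivFunOnFinite.symm (fun i => r i * δ i)
noncomputable def divr (r : Fin n → ℕ) (δ : Fin n →₀ ℕ) : Fin n →₀ ℕ :=
  Finsupp.equivFunOnFinite.symm (fun i => δ i / r i)
noncomputable def gam {r : Fin n → ℕ} (γ : ∀ i, Fin (r i)) : Fin n →₀ ℕ :=
  Finsupp.equivFunOnFinite.symm (fun i => (γ i : ℕ))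

lemma Er_monomial (r : Fin n → ℕ) (δ : Fin n →₀ ℕ) (c : k) :
    Er k r (monomial δ c) = monomial (mulr r δ) c := by
  rw [Er, aeval_monomial, monomial_eq (s := mulr r δ)]
  congr 1
  rw [Finsupp.prod_fintype _ _ (by simp), Finsupp.prod_fintype _ _ (by simp)]
  refine Finset.prod_congr rfl fun i _ => ?_
  rw [← pow_mul]; rfl

open Classical in
noncomputable def pig (k : Type*) [Field k] {r : Fin n → ℕ} (γ : ∀ i, Fin (r i)) :
    MvPolynomial (Fin n) k →ₗ[k] MvPolynomial (Fin n) k :=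
  (basisMonomials (Fin n) k).constr k
    (fun δ => if ∀ i, δ i % r i = γ i then monomial (divr r δ) 1 else 0)

open Classical in
lemma pig_monomial {r : Fin n → ℕ} (γ : ∀ i, Fin (r i)) (δ : Fin n →₀ ℕ) (c : k) :
    pig k γ (monomial δ c) = if ∀ i, δ i % r i = γ i then monomial (divr r δ) c else 0 := by
  have h : monomial δ c = c • (basisMonomials (Fin n) k) δ := by
    simp [coe_basisMonomials, smul_monomial]
  rw [h, map_smul, pig, Module.Basis.constr_basis]
  split_ifs <;> simp [smul_monomial]

lemma pig_mul {r : Fin n → ℕ} (hr : ∀ i, 0 < r i) (γ : ∀ i, Fin (r i))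
    (g f : MvPolynomial (Fin n) k) : pig k γ (Er k r g * f) = g * pig k γ f := by
  classical
  induction g using MvPolynomial.induction_on' with
  | add p q hp hq => rw [map_add, add_mul, map_add, hp, hq, add_mul]
  | monomial u a =>
    induction f using MvPolynomial.induction_on' with
    | add p q hp hq => rw [mul_add, map_add, hp, hq, map_add, mul_add]
    | monomial v b =>
      rw [Er_monomial, monomial_mul, pig_monomial, pig_monomial]
      have h1 : ∀ i, (mulr r u + v) i % r i = v i % r i := fun i => by
        simp [mulr]
      have h2 : divr r (mulr r u + v) = u + divr r v := by
        ext i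
        simp [mulr, divr, Nat.mul_add_div (hr i)]
      simp only [h1, h2]
      split_ifs
      · rw [monomial_mul]
      · simp

lemma pig_gam {r : Fin n → ℕ} (hr : ∀ i, 0 < r i) (γ γ' : ∀ i, Fin (r i))
    (g : MvPolynomial (Fin n) k) :
    pig k γ' (Er k r g * monomial (gam γ) 1) = if γ' = γ then g else 0 := by
  classical
  rw [pig_mul hr, pig_monomial]
  have h1 : ∀ i, gam γ i % r i = γ i := fun i => by
    simp [gam, Nat.mod_eq_of_lt (γ i).2]
  have h2 : divr r (gam γ) = 0 := by
    ext i; simp [gam, divr, Nat.div_eq_of_lt (γ i).2]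
  simp only [h1, h2]
  by_cases h : γ' = γ
  · subst h; simp
  · have : ¬ ∀ i, (γ i : ℕ) = γ' i := fun h' => h (funext fun i => Fin.ext (h' i).symm)
    simp [h, this]

lemma pig_sum {r : Fin n → ℕ} (hr : ∀ i, 0 < r i) (f : MvPolynomial (Fin n) k) :
    f = ∑ γ : (∀ i, Fin (r i)), Er k r (pig k γ f) * monomial (gam γ) 1 := by
  classical
  induction f using MvPolynomial.induction_on' with
  | add p q hp hq =>
    simp only [map_add, add_mul, Finset.sum_add_distrib]
    rw [← hp, ← hq]
  | monomial u a =>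
    let γ : ∀ i, Fin (r i) := fun i => ⟨u i % r i, Nat.mod_lt _ (hr i)⟩
    rw [Finset.sum_eq_single γ]
    · rw [pig_monomial, if_pos (fun i => rfl), Er_monomial, monomial_mul, mul_one]
      have h : mulr r (divr r u) + gam γ = u := by
        ext i
        simp [mulr, divr, gam, γ, Nat.div_add_mod]
      rw [h]
    · intro γ' _ h
      rw [pig_monomial, if_neg, map_zero, zero_mul]
      intro h'
      exact h (funext fun i => Fin.ext (h' i).symm)
    · simp

lemma mem_map_Er {r : Fin n → ℕ} (hr : ∀ i, 0 < r i) (J : Ideal (MvPolynomial (Fin n) k))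
    (f : MvPolynomial (Fin n) k) :
    f ∈ J.map (Er k r) ↔ ∀ γ : (∀ i, Fin (r i)), pig k γ f ∈ J := by
  constructor
  · intro h γ
    rw [Ideal.map] at h
    induction h using Submodule.span_induction generalizing γ with
    | mem x h =>
      obtain ⟨g, hg, rfl⟩ := h
      have := pig_mul hr γ g 1
      rw [mul_one] at this
      erw [this]
      exact J.mul_mem_right _ hg
    | zero => simp
    | add x y _ _ hx hy => rw [map_add]; exact J.add_mem (hx γ) (hy γ)
    | smul a x _ hx =>
      rw [smul_eq_mul, pig_sum hr x, Finset.mul_sum, map_sum]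
      refine J.sum_mem fun γ' _ => ?_
      rw [mul_left_comm, pig_mul hr]
      exact J.mul_mem_right _ (hx γ')
  · intro h
    rw [pig_sum hr f]
    refine Ideal.sum_mem _ fun γ _ => Ideal.mul_mem_right _ _ (Ideal.mem_map_of_mem _ (h γ))

/-- key freeness lemma -/
lemma finrank_map_Er {r : Fin n → ℕ} (hr : ∀ i, 0 < r i) (J : Ideal (MvPolynomial (Fin n) k))
    [Module.Finite k (MvPolynomial (Fin n) k ⧸ J)] :
    Module.Finite k (MvPolynomial (Fin n) k ⧸ J.map (Er k r)) ∧
    Module.finrank k (MvPolynomial (Fin n) k ⧸ J.map (Er k r)) =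
      (∏ i, r i) * Module.finrank k (MvPolynomial (Fin n) k ⧸ J) := by
  classical
  let φ : MvPolynomial (Fin n) k →ₗ[k] ((∀ i, Fin (r i)) → (MvPolynomial (Fin n) k ⧸ J)) :=
    LinearMap.pi fun γ => (Ideal.Quotient.mkₐ k J).toLinearMap ∘ₗ pig k γ
  have hφ : ∀ f γ, φ f γ = Ideal.Quotient.mk J (pig k γ f) := fun f γ => rfl
  have hs : Function.Surjective φ := by
    intro v
    choose g hg using fun γ => Ideal.Quotient.mk_surjective (v γ)
    refine ⟨∑ γ, Er k r (g γ) * monomial (gam γ) 1, ?_⟩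
    ext γ'
    rw [hφ, map_sum]
    simp_rw [pig_gam hr]
    simp [hg]
  have hk : LinearMap.ker φ = (J.map (Er k r)).restrictScalars k := by
    ext f
    rw [LinearMap.mem_ker, Submodule.restrictScalars_mem, mem_map_Er hr, funext_iff]
    simp only [hφ, Pi.zero_apply, Ideal.Quotient.eq_zero_iff_mem]
  have e1 := LinearMap.quotKerEquivOfSurjective φ hs
  rw [hk] at e1
  have e2 : (MvPolynomial (Fin n) k ⧸ J.map (Er k r)) ≃ₗ[k]
      ((∀ i, Fin (r i)) → (MvPolynomial (Fin n) k ⧸ J)) :=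
    (Submodule.Quotient.restrictScalarsEquiv k (J.map (Er k r))).symm.trans e1
  refine ⟨Module.Finite.equiv e2.symm, ?_⟩
  rw [e2.finrank_eq, Module.finrank_pi_fintype]
  simp

end expand


section KKsec
variable {k : Type*} [Field k]

noncomputable def KI {n : ℕ} (β : Fin n → ℕ) (f : MvPolynomial (Fin n) k) : Ideal (MvPolynomial (Fin n) k) :=
  Ideal.span (Set.range (fun i : Fin n => (X i : MvPolynomial (Fin n) k) ^ β i) ∪ {f})

noncomputable def KK {n : ℕ} (β : Fin n → ℕ) (f : MvPolynomial (Fin n) k) : ℕ :=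
  Module.finrank k (MvPolynomial (Fin n) k ⧸ KI β f)

lemma KI_le {n : ℕ} {β : Fin n → ℕ} {f : MvPolynomial (Fin n) k}
    {J : Ideal (MvPolynomial (Fin n) k)} :
    KI β f ≤ J ↔ (∀ i, X i ^ β i ∈ J) ∧ f ∈ J := by
  rw [KI, Ideal.span_le, Set.union_subset_iff]
  simp [Set.range_subset_iff]

lemma X_mem_KI {n : ℕ} (β : Fin n → ℕ) (f : MvPolynomial (Fin n) k) (i) : X i ^ β i ∈ KI β f :=
  (KI_le.1 le_rfl).1 i
lemma f_mem_KI {n : ℕ} (β : Fin n → ℕ) (f : MvPolynomial (Fin n) k) : f ∈ KI β f :=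
  (KI_le.1 le_rfl).2

lemma map_KI {n : ℕ} (β : Fin n → ℕ) (f : MvPolynomial (Fin n) k) (r : Fin n → ℕ) :
    (KI β f).map (Er k r) = KI (fun i => r i * β i) (Er k r f) := by
  rw [KI, Ideal.map_span, Set.image_union, ← Set.range_comp, Set.image_singleton, KI]
  congr 3
  ext1 i
  simp [Er, pow_mul]

/-- dimension of the monomial complete intersection -/
lemma finrank_KI_zero {n : ℕ} (β : Fin n → ℕ) (hβ : ∀ i, 0 < β i) :
    Module.Finite k (MvPolynomial (Fin n) k ⧸ KI (k := k) β 0) ∧ KK (k := k) β 0 = ∏ i, β i := by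
  have hker : KI (k := k) (fun _ : Fin n => 1) 0 = RingHom.ker (aeval (R := k) (fun _ : Fin n => (0 : k))) := by
    apply le_antisymm
    · rw [KI_le]; simp [RingHom.mem_ker]
    · intro f hf
      rw [RingHom.mem_ker] at hf
      have h2 : ∀ f : MvPolynomial (Fin n) k, f - C (aeval (R := k) (fun _ : Fin n => (0 : k)) f) ∈ KI (k := k) (fun _ : Fin n => 1) 0 := by
        intro f
        induction f using MvPolynomial.induction_on with
        | C a => simp
        | add p q hp hq =>
          have := Ideal.add_mem _ hp hq
          rw [map_add, C_add]; convert this using 1; ring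
        | mul_X p i hp =>
          have := X_mem_KI (k := k) (fun _ : Fin n => 1) 0 i
          simp only [pow_one] at this
          simpa using Ideal.mul_mem_left _ p this
      simpa [hf] using h2 f
  have e : (MvPolynomial (Fin n) k ⧸ KI (k := k) (fun _ : Fin n => 1) 0) ≃ₗ[k] k := by
    rw [hker]
    refine (Ideal.quotientKerAlgEquivOfSurjective (f := aeval (R := k) (fun _ : Fin n => (0 : k))) ?_).toLinearEquiv
    intro c
    exact ⟨C c, by simp⟩
  have : Module.Finite k (MvPolynomial (Fin n) k ⧸ KI (k := k) (fun _ : Fin n => 1) 0) :=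
    Module.Finite.equiv e.symm
  have h := finrank_map_Er (k := k) hβ (KI (k := k) (fun _ : Fin n => 1) 0)
  rw [map_KI, e.finrank_eq, Module.finrank_self] at h
  have hb : (fun i => β i * 1) = β := by simp
  rw [map_zero, hb, mul_one] at h
  exact h

lemma KI_finite {n : ℕ} (β : Fin n → ℕ) (hβ : ∀ i, 0 < β i) (f : MvPolynomial (Fin n) k) :
    Module.Finite k (MvPolynomial (Fin n) k ⧸ KI β f) := by
  have := (finrank_KI_zero (k := k) β hβ).1
  have hle : KI (k := k) β 0 ≤ KI β f := KI_le.2 ⟨X_mem_KI _ _, by simp⟩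
  exact Module.Finite.of_surjective (Ideal.Quotient.factorₐ k hle).toLinearMap
    (Ideal.Quotient.factor_surjective hle)

lemma finrank_anti {n : ℕ} {I J : Ideal (MvPolynomial (Fin n) k)} (hle : I ≤ J)
    [Module.Finite k (MvPolynomial (Fin n) k ⧸ I)] :
    Module.finrank k (MvPolynomial (Fin n) k ⧸ J) ≤ Module.finrank k (MvPolynomial (Fin n) k ⧸ I) :=
  LinearMap.finrank_le_finrank_of_surjective (f := (Ideal.Quotient.factorₐ k hle).toLinearMap)
    (Ideal.Quotient.factor_surjective hle)

lemma KK_mono {n : ℕ} {β β' : Fin n → ℕ} (h : ∀ i, β i ≤ β' i) (hβ : ∀ i, 0 < β' i)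
    (f : MvPolynomial (Fin n) k) : KK β f ≤ KK β' f := by
  have := KI_finite (k := k) β' hβ f
  refine finrank_anti (KI_le.2 ⟨fun i => ?_, f_mem_KI _ _⟩)
  exact Ideal.mem_of_dvd _ (pow_dvd_pow _ (h i)) (X_mem_KI _ _ i)

lemma KK_le_prod {n : ℕ} {β : Fin n → ℕ} (hβ : ∀ i, 0 < β i)
    (f : MvPolynomial (Fin n) k) : KK β f ≤ ∏ i, β i := by
  rw [← (finrank_KI_zero (k := k) β hβ).2]
  have := KI_finite (k := k) β hβ 0
  exact finrank_anti (KI_le.2 ⟨X_mem_KI _ _, by simp⟩)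

lemma KK_Er {n : ℕ} {β r : Fin n → ℕ} (hβ : ∀ i, 0 < β i) (hr : ∀ i, 0 < r i)
    (f : MvPolynomial (Fin n) k) :
    KK (fun i => r i * β i) (Er k r f) = (∏ i, r i) * KK β f := by
  have := KI_finite (k := k) β hβ f
  have := (finrank_map_Er hr (KI β f)).2
  rwa [map_KI] at this

noncomputable def ell (k : Type*) [Field k] (n : ℕ) : MvPolynomial (Fin n) k := ∑ i, X i

noncomputable def DD (k : Type*) [Field k] {n : ℕ} (β : Fin n → ℕ) : ℕ := KK β (ell k n)

lemma DD_perm {n : ℕ} (σ : Equiv.Perm (Fin n)) (β : Fin n → ℕ) : DD k (β ∘ σ) = DD k β := by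
  refine (Ideal.quotientEquivAlg (KI (β ∘ σ) (ell k n)) (KI β (ell k n)) (renameEquiv k σ) ?_).toLinearEquiv.finrank_eq
  rw [KI, KI, Ideal.map_span, Set.image_union, ← Set.range_comp, Set.image_singleton]
  congr 2
  · rw [← σ.surjective.range_comp]
    congr 1
    ext1 i
    simp
  · simp [ell, Equiv.sum_comp σ (fun i => (X i : MvPolynomial (Fin n) k))]

/-- elimination of the first variable -/
lemma DD_cons {n : ℕ} (b : ℕ) (β : Fin n → ℕ) :
    DD k (Fin.cons b β : Fin (n + 1) → ℕ) = KK β (ell k n ^ b) := by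
  let I := KI (Fin.cons b β : Fin (n + 1) → ℕ) (ell k (n + 1))
  let J := KI β (ell k n ^ b)
  let φ : MvPolynomial (Fin (n + 1)) k →ₐ[k] MvPolynomial (Fin n) k :=
    aeval (Fin.cons (- ell k n) X : Fin (n + 1) → MvPolynomial (Fin n) k)
  let ψ : MvPolynomial (Fin n) k →ₐ[k] MvPolynomial (Fin (n + 1)) k := aeval (fun i => X i.succ)
  have hφ0 : φ (X 0) = - ell k n := by simp [φ]
  have hφs : ∀ i, φ (X (Fin.succ i)) = X i := fun i => by simp [φ]
  have hψ : ∀ i, ψ (X i) = X (Fin.succ i) := fun i => by simp [ψ]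
  have hφl : φ (ell k (n+1)) = 0 := by
    rw [ell, Fin.sum_univ_succ, map_add, map_sum, hφ0]
    simp only [hφs]; simp [ell]
  have hψl : ψ (ell k n) = ell k (n+1) - X 0 := by
    rw [ell, map_sum, ell, Fin.sum_univ_succ]
    simp only [hψ]; simp
  have h1 : I ≤ J.comap φ := by
    refine KI_le.2 ⟨fun i => ?_, ?_⟩
    · rw [Ideal.mem_comap, map_pow]
      refine Fin.cases ?_ (fun i => ?_) i
      · rw [hφ0, Fin.cons_zero, neg_pow]
        exact Ideal.mul_mem_left _ _ (f_mem_KI _ _)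
      · rw [hφs, Fin.cons_succ]; exact X_mem_KI _ _ i
    · rw [Ideal.mem_comap, hφl]; exact J.zero_mem
  have hX0 : Ideal.Quotient.mk I (ψ (ell k n)) = - Ideal.Quotient.mk I (X 0) := by
    rw [hψl, map_sub, Ideal.Quotient.eq_zero_iff_mem.2 (f_mem_KI _ _), zero_sub]
  have h2 : J ≤ I.comap ψ := by
    refine KI_le.2 ⟨fun i => ?_, ?_⟩
    · rw [Ideal.mem_comap, map_pow, hψ]
      have := X_mem_KI (k := k) (Fin.cons b β : Fin (n + 1) → ℕ) (ell k (n+1)) i.succ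
      rwa [Fin.cons_succ] at this
    · rw [Ideal.mem_comap, map_pow, hψl]
      have h3 := sub_dvd_pow_sub_pow (ell k (n+1) - X 0) (- X 0) b
      rw [sub_neg_eq_add, sub_add_cancel] at h3
      have h4 := Ideal.mem_of_dvd I h3 (f_mem_KI _ _)
      have h5 := X_mem_KI (k := k) (Fin.cons b β : Fin (n + 1) → ℕ) (ell k (n+1)) 0
      rw [Fin.cons_zero] at h5
      have h6 := Ideal.mul_mem_left I ((-1) ^ b) h5
      rw [← neg_pow] at h6
      simpa using I.add_mem h4 h6
  let f := Ideal.quotientMapₐ J φ h1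
  let g := Ideal.quotientMapₐ I ψ h2
  refine (AlgEquiv.ofAlgHom f g ?_ ?_).toLinearEquiv.finrank_eq
  · apply Ideal.Quotient.algHom_ext
    apply MvPolynomial.algHom_ext
    intro i
    change Ideal.Quotient.mk J (φ (ψ (X i))) = Ideal.Quotient.mk J (X i)
    rw [hψ, hφs]
  · apply Ideal.Quotient.algHom_ext
    apply MvPolynomial.algHom_ext
    intro i
    change Ideal.Quotient.mk I (ψ (φ (X i))) = Ideal.Quotient.mk I (X i)
    refine Fin.cases ?_ (fun i => ?_) i
    · rw [hφ0, map_neg, map_neg, hX0, neg_neg]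
    · rw [hφs, hψ]

end KKsec


section dickson

lemma dick_roots {S : Type*} [CommRing S] [CharP S 3] (u v : S) (P : ℕ → S)
    (h0 : P 0 = 2) (h1 : P 1 = 2 * (v ^ 2 + u ^ 2))
    (h2 : ∀ n, P (n + 2) = 2 * (v ^ 2 + u ^ 2) * P (n + 1) - (v ^ 2 - u ^ 2) ^ 2 * P n)
    (e s : ℕ) (hs : 2 * s + 1 = 3 ^ e) :
    P (s + 1) = 2 * ((v ^ 2) ^ (s + 1) + (u ^ 2) ^ (s + 1)) ∧
    (v ^ 2 - u ^ 2) * P s = 2 * ((v ^ 2) ^ (s + 1) - (u ^ 2) ^ (s + 1)) := by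
  have hp : ∀ n, P n = (v + u) ^ (2 * n) + (v - u) ^ (2 * n) ∧
      P (n + 1) = (v + u) ^ (2 * (n + 1)) + (v - u) ^ (2 * (n + 1)) := by
    intro n
    induction n with
    | zero => constructor
              · rw [h0]; norm_num
              · rw [h1]; ring
    | succ n ih =>
      refine ⟨ih.2, ?_⟩
      rw [h2, ih.1, ih.2]; ring
  have : Fact (Nat.Prime 3) := ⟨by norm_num⟩
  have ha : (v + u) ^ (2 * s + 1) = v ^ (2 * s + 1) + u ^ (2 * s + 1) := by
    rw [hs]; exact add_pow_char_pow v u 3 e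
  have hb : (v - u) ^ (2 * s + 1) = v ^ (2 * s + 1) - u ^ (2 * s + 1) := by
    rw [hs]; exact sub_pow_char_pow v u e
  constructor
  · rw [(hp s).2]
    have : (v + u) ^ (2 * (s + 1)) + (v - u) ^ (2 * (s + 1)) =
      (v + u) * (v + u) ^ (2 * s + 1) + (v - u) * (v - u) ^ (2 * s + 1) := by ring
    rw [this, ha, hb]; ring
  · rw [(hp s).1]
    have : (v ^ 2 - u ^ 2) * ((v + u) ^ (2 * s) + (v - u) ^ (2 * s)) =
      (v - u) * (v + u) ^ (2 * s + 1) + (v + u) * (v - u) ^ (2 * s + 1) := by ring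
    rw [this, ha, hb]; ring

lemma exists_sq.{u} {S : Type u} [CommRing S] (y : S) :
    ∃ (S1 : Type u) (_ : CommRing S1) (i : S →+* S1), Function.Injective i ∧ ∃ u, u ^ 2 = i y := by
  refine ⟨QuadraticAlgebra S y 0, inferInstance, algebraMap S (QuadraticAlgebra S y 0),
    QuadraticAlgebra.algebraMap_injective, QuadraticAlgebra.omega, ?_⟩
  ext <;> simp [pow_two]

lemma dick_of_hom {S S2 : Type*} [CommRing S] [CommRing S2] [CharP S 3] (i : S →+* S2)
    (hi : Function.Injective i) (u v : S2) (y Y : S) (hu : u ^ 2 = i y) (hv : v ^ 2 = i Y)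
    (P : ℕ → S)
    (h0 : P 0 = 2) (h1 : P 1 = 2 * (Y + y))
    (h2 : ∀ n, P (n + 2) = 2 * (Y + y) * P (n + 1) - (Y - y) ^ 2 * P n)
    (e s : ℕ) (hs : 2 * s + 1 = 3 ^ e) :
    P (s + 1) = 2 * (Y ^ (s + 1) + y ^ (s + 1)) ∧
    (Y - y) * P s = 2 * (Y ^ (s + 1) - y ^ (s + 1)) := by
  have : CharP S2 3 := charP_of_injective_ringHom hi 3
  have h2i : i 2 = 2 := map_ofNat i 2
  have key := dick_roots u v
    (fun n => i (P n)) (by simp [h0, h2i]) (by rw [h1, hu, hv]; simp [h2i])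
    (by intro n; rw [h2, hu, hv]; simp [h2i]) e s hs
  rw [hu, hv] at key
  constructor
  · apply hi; rw [key.1]; simp [h2i]
  · apply hi; rw [map_mul, map_sub, key.2]; simp [h2i]

lemma dick {S : Type*} [CommRing S] [CharP S 3] (y Y : S) (P : ℕ → S)
    (h0 : P 0 = 2) (h1 : P 1 = 2 * (Y + y))
    (h2 : ∀ n, P (n + 2) = 2 * (Y + y) * P (n + 1) - (Y - y) ^ 2 * P n)
    (e s : ℕ) (hs : 2 * s + 1 = 3 ^ e) :
    P (s + 1) = 2 * (Y ^ (s + 1) + y ^ (s + 1)) ∧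
    (Y - y) * P s = 2 * (Y ^ (s + 1) - y ^ (s + 1)) := by
  obtain ⟨S1, _, i1, hi1, u, hu⟩ := exists_sq y
  obtain ⟨S2, _, i2, hi2, v, hv⟩ := exists_sq (i1 Y)
  exact dick_of_hom (i2.comp i1) (hi2.comp hi1) (i2 u) v y Y (by rw [← map_pow, hu]; rfl) hv
    P h0 h1 h2 e s hs

end dickson

section lemB
open Polynomial

noncomputable def PP {R : Type*} [CommRing R] (t : R) : ℕ → R[X]
  | 0 => 2
  | 1 => Polynomial.X - Polynomial.C t
  | (n + 2) => (Polynomial.X - Polynomial.C t) * PP t (n + 1) - Polynomial.C (t ^ 2) * PP t n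

lemma PP_deg {R : Type*} [CommRing R] [IsDomain R] (t : R) (n : ℕ) :
    (PP t n).natDegree ≤ n ∧ (PP t (n + 1)).Monic ∧ (PP t (n + 1)).natDegree = n + 1 := by
  induction n with
  | zero =>
    refine ⟨?_, ?_, ?_⟩
    · change Polynomial.natDegree (2 : R[X]) ≤ 0
      exact (Polynomial.natDegree_C (2 : R)).le
    · exact Polynomial.monic_X_sub_C t
    · exact Polynomial.natDegree_X_sub_C t
  | succ n ih =>
    have hm : ((Polynomial.X - Polynomial.C t) * PP t (n + 1)).Monic :=
      (Polynomial.monic_X_sub_C t).mul ih.2.1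
    have hd : ((Polynomial.X - Polynomial.C t) * PP t (n + 1)).natDegree = n + 2 := by
      rw [(Polynomial.monic_X_sub_C t).natDegree_mul ih.2.1, Polynomial.natDegree_X_sub_C, ih.2.2]
      ring
    have hl : (Polynomial.C (t ^ 2) * PP t n).natDegree ≤ n :=
      (Polynomial.natDegree_C_mul_le _ _).trans ih.1
    have hlt : (Polynomial.C (t ^ 2) * PP t n).degree <
        ((Polynomial.X - Polynomial.C t) * PP t (n + 1)).degree :=
      Polynomial.degree_lt_degree (by omega)
    refine ⟨ih.2.2.le, hm.sub_of_left hlt, ?_⟩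
    change Polynomial.natDegree (_ - _) = _
    rw [Polynomial.natDegree_sub_eq_left_of_natDegree_lt (by omega), hd]

variable {R : Type*} [CommRing R] [IsDomain R] [CharP R 3]

lemma three0 : (3 : R) = 0 := by exact_mod_cast CharP.cast_eq_zero R 3
lemma four1 : (2 : R) * 2 = 1 := by linear_combination (three0 : (3 : R) = 0)
lemma two_ne : (2 : R) ≠ 0 := fun h => by
  have := four1 (R := R); rw [h] at this; simp at this

lemma PP_degree (t : R) (n : ℕ) : (PP t n).degree = n := by
  cases n with
  | zero => exact Polynomial.degree_C (two_ne (R := R))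
  | succ n =>
    have h := PP_deg t n
    rw [Polynomial.degree_eq_natDegree h.2.1.ne_zero, h.2.2]

noncomputable def PS (t : R) : Polynomial.Sequence R := ⟨PP t, PP_degree t⟩

lemma PS_unit (t : R) (n : ℕ) : IsUnit ((PS t) n).leadingCoeff := by
  cases n with
  | zero =>
    change IsUnit (Polynomial.leadingCoeff (Polynomial.C (2 : R)))
    rw [Polynomial.leadingCoeff_C]
    exact IsUnit.of_mul_eq_one _ four1
  | succ n =>
    have h := (PP_deg t n).2.1
    change IsUnit (Polynomial.leadingCoeff (PP t (n + 1)))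
    rw [h.leadingCoeff]; exact isUnit_one

noncomputable def PB (t : R) : Module.Basis ℕ R R[X] := (PS t).basis (PS_unit t)

lemma PB_apply (t : R) (n : ℕ) : PB t n = PP t n := Polynomial.Sequence.basis_eq_self _ _ n

def Kb (I : Ideal R) (t : R) (a b : ℕ) : Ideal R := I ⊔ Ideal.span {t ^ (2 * (a - b) - 1)}

lemma Kb_succ {I : Ideal R} {t : R} {a b : ℕ} {r : R} (h : r ∈ Kb I t a b) :
    r ∈ Kb I t a (b + 1) := by
  refine (sup_le_sup_left ?_ _ : Kb I t a b ≤ Kb I t a (b + 1)) h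
  rw [Ideal.span_singleton_le_span_singleton]
  exact pow_dvd_pow _ (by omega)

lemma Kb_pred {I : Ideal R} {t : R} {a b : ℕ} {r : R} (h : r ∈ Kb I t a (b + 1)) :
    r * t ^ 2 ∈ Kb I t a b := by
  obtain ⟨i, hi, j, hj, rfl⟩ := Submodule.mem_sup.1 h
  rw [add_mul]
  refine Ideal.add_mem _ (Ideal.mem_sup_left (I.mul_mem_right _ hi)) (Ideal.mem_sup_right ?_)
  obtain ⟨c, rfl⟩ := Ideal.mem_span_singleton.1 hj
  rw [Ideal.mem_span_singleton, mul_right_comm, ← pow_add]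
  exact Dvd.dvd.mul_right (pow_dvd_pow _ (by omega)) _

noncomputable def UU (I : Ideal R) (t : R) (a : ℕ) : Submodule R R[X] :=
  ⨅ b, Submodule.comap ((PB t).coord b) (Kb I t a b)

lemma mem_UU {I : Ideal R} {t : R} {a : ℕ} {f : R[X]} :
    f ∈ UU I t a ↔ ∀ b, (PB t).repr f b ∈ Kb I t a b := by
  simp [UU, Submodule.mem_iInf]

lemma smul_mem_UU {I : Ideal R} {t : R} {a b : ℕ} {r : R} (h : r ∈ Kb I t a b) :
    r • PP t b ∈ UU I t a := by
  rw [mem_UU]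
  intro c
  rw [← PB_apply, map_smul, Module.Basis.repr_self, Finsupp.smul_single, smul_eq_mul, mul_one,
    Finsupp.single_apply]
  split_ifs with hc
  · rwa [← hc]
  · exact Ideal.zero_mem _

lemma PP_sum (t : R) (f : R[X]) : f = ∑ b ∈ ((PB t).repr f).support, (PB t).repr f b • PP t b := by
  conv_lhs => rw [← (PB t).linearCombination_repr f, Finsupp.linearCombination_apply, Finsupp.sum]
  simp only [PB_apply]

lemma M_mem_UU {I : Ideal R} {t : R} {a : ℕ} {f : R[X]} (h : f ∈ UU I t a) :
    (Polynomial.X - Polynomial.C t) * f ∈ UU I t a := by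
  rw [PP_sum t f, Finset.mul_sum]
  refine Submodule.sum_mem _ fun b _ => ?_
  have hb := mem_UU.1 h b
  generalize (PB t).repr f b = r at hb
  cases b with
  | zero =>
    have : (Polynomial.X - Polynomial.C t) * (r • PP t 0) = (r * 2) • PP t 1 := by
      simp only [PP, Polynomial.smul_eq_C_mul, Polynomial.C_mul]
      rw [show (Polynomial.C (2 : R)) = 2 from rfl]; ring
    rw [this]
    exact smul_mem_UU (Ideal.mul_mem_right _ _ (Kb_succ hb))
  | succ b =>
    have : (Polynomial.X - Polynomial.C t) * (r • PP t (b + 1)) =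
        r • PP t (b + 2) + (r * t ^ 2) • PP t b := by
      simp only [PP, Polynomial.smul_eq_C_mul, Polynomial.C_mul]; ring
    rw [this]
    exact Submodule.add_mem _ (smul_mem_UU (Kb_succ hb)) (smul_mem_UU (Kb_pred hb))

lemma mul_mem_UU {I : Ideal R} {t : R} {a : ℕ} (p : R[X]) {f : R[X]} (h : f ∈ UU I t a) :
    p * f ∈ UU I t a := by
  have hX : ∀ g ∈ UU I t a, Polynomial.X * g ∈ UU I t a := by
    intro g hg
    have : Polynomial.X * g = (Polynomial.X - Polynomial.C t) * g + t • g := by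
      rw [Polynomial.smul_eq_C_mul]; ring
    rw [this]
    exact Submodule.add_mem _ (M_mem_UU hg) (Submodule.smul_mem _ _ hg)
  induction p using Polynomial.induction_on' with
  | add p q hp hq => rw [add_mul]; exact Submodule.add_mem _ hp hq
  | monomial n c =>
    rw [← Polynomial.C_mul_X_pow_eq_monomial, mul_assoc, ← Polynomial.smul_eq_C_mul]
    refine Submodule.smul_mem _ _ ?_
    induction n with
    | zero => simpa using h
    | succ n ih => rw [pow_succ', mul_assoc]; exact hX _ ih

noncomputable def JB (I : Ideal R) (t : R) (a : ℕ) : Ideal R[X] :=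
  I.map Polynomial.C ⊔ Ideal.span {Polynomial.X ^ a, (Polynomial.X + Polynomial.C t) ^ a}

lemma PP_id (t : R) (e s : ℕ) (hs : 2 * s + 1 = 3 ^ e) :
    PP t (s + 1) + Polynomial.C t * PP t s = (Polynomial.X + Polynomial.C t) ^ (s + 1) ∧
    PP t (s + 1) - Polynomial.C t * PP t s = Polynomial.X ^ (s + 1) := by
  have h3 : (3 : R[X]) = 0 := three0
  have hM : (2 : R[X]) * (Polynomial.X + Polynomial.C t + Polynomial.X) =
      Polynomial.X - Polynomial.C t := by
    linear_combination (Polynomial.X + Polynomial.C t) * h3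
  have := dick (S := R[X]) Polynomial.X (Polynomial.X + Polynomial.C t) (PP t) rfl
    (by rw [hM]; rfl) (by intro n; rw [hM]; simp only [PP, Polynomial.C_pow]; ring) e s hs
  rw [show Polynomial.X + Polynomial.C t - Polynomial.X = Polynomial.C t by ring] at this
  obtain ⟨h1, h2⟩ := this
  rw [h1, h2]
  constructor
  · linear_combination (Polynomial.X + Polynomial.C t) ^ (s + 1) * h3
  · linear_combination (Polynomial.X ) ^ (s + 1) * h3

lemma JB_eq (I : Ideal R) (t : R) (e s : ℕ) (hs : 2 * s + 1 = 3 ^ e) (f : R[X]) :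
    f ∈ JB I t (s + 1) ↔ f ∈ UU I t (s + 1) := by
  obtain ⟨id1, id2⟩ := PP_id t e s hs
  have h3 : (3 : R[X]) = 0 := three0
  constructor
  · intro hf
    have hP : PP t (s + 1) ∈ UU I t (s + 1) := by
      have := smul_mem_UU (I := I) (t := t) (a := s + 1) (b := s + 1) (r := 1)
        (Ideal.mem_sup_right (by simp))
      rwa [one_smul] at this
    have htP : Polynomial.C t * PP t s ∈ UU I t (s + 1) := by
      have := smul_mem_UU (I := I) (t := t) (a := s + 1) (b := s) (r := t)
        (Ideal.mem_sup_right (by rw [Ideal.mem_span_singleton]; simp))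
      rwa [Polynomial.smul_eq_C_mul] at this
    have hC : ∀ i ∈ I, Polynomial.C i ∈ UU I t (s + 1) := by
      intro i hi
      have := smul_mem_UU (I := I) (t := t) (a := s + 1) (b := 0) (r := i * 2)
        (Ideal.mem_sup_left (I.mul_mem_right _ hi))
      rw [Polynomial.smul_eq_C_mul] at this
      convert this using 1
      change _ = _ * Polynomial.C (2 : R)
      rw [← Polynomial.C_mul, mul_assoc, four1, mul_one]
    let U' : Ideal R[X] :=
      { carrier := UU I t (s + 1)
        add_mem' := fun ha hb => Submodule.add_mem _ ha hb
        zero_mem' := Submodule.zero_mem _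
        smul_mem' := fun c x hx => mul_mem_UU c hx }
    have : JB I t (s + 1) ≤ U' := by
      refine sup_le (Ideal.map_le_iff_le_comap.2 hC) (Ideal.span_le.2 ?_)
      rintro x (rfl | rfl)
      · rw [← id2]; exact Submodule.sub_mem _ hP htP
      · rw [← id1]; exact Submodule.add_mem _ hP htP
    exact this hf
  · intro hf
    have hX : (Polynomial.X : R[X]) ^ (s + 1) ∈ JB I t (s + 1) :=
      Ideal.mem_sup_right (Ideal.subset_span (by simp))
    have hY : (Polynomial.X + Polynomial.C t : R[X]) ^ (s + 1) ∈ JB I t (s + 1) :=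
      Ideal.mem_sup_right (Ideal.subset_span (by simp))
    rw [← id2] at hX
    rw [← id1] at hY
    have hP : PP t (s + 1) ∈ JB I t (s + 1) := by
      have := Ideal.mul_mem_left _ 2 (Ideal.add_mem _ hX hY)
      convert this using 1
      linear_combination - PP t (s + 1) * h3
    have htP : Polynomial.C t * PP t s ∈ JB I t (s + 1) := by
      have := Ideal.sub_mem _ hY hP
      convert this using 1; ring
    have hup : ∀ j, PP t (s + 1 + j) ∈ JB I t (s + 1) ∧ PP t (s + 1 + j + 1) ∈ JB I t (s + 1) := by
      intro j
      induction j with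
      | zero =>
        refine ⟨hP, ?_⟩
        have := Ideal.sub_mem _ (Ideal.mul_mem_left _ (Polynomial.X - Polynomial.C t) hP)
          (Ideal.mul_mem_left _ (Polynomial.C t) htP)
        convert this using 1
        simp only [PP, Polynomial.C_pow]; ring
      | succ j ih =>
        refine ⟨ih.2, ?_⟩
        have := Ideal.sub_mem _ (Ideal.mul_mem_left _ (Polynomial.X - Polynomial.C t) ih.2)
          (Ideal.mul_mem_left _ (Polynomial.C (t ^ 2)) ih.1)
        rw [show s + 1 + (j + 1) + 1 = (s + 1 + j) + 2 by ring, PP]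
        exact this
    have hdown : ∀ i b, b + i = s → Polynomial.C (t ^ (2 * i + 1)) * PP t b ∈ JB I t (s + 1) ∧
        Polynomial.C (t ^ (2 * i)) * PP t (b + 1) ∈ JB I t (s + 1) := by
      intro i
      induction i with
      | zero =>
        intro b hb
        have : b = s := by omega
        subst this
        exact ⟨by simpa using htP, by simpa using hP⟩
      | succ i ih =>
        intro b hb
        obtain ⟨h1, h2⟩ := ih (b + 1) (by omega)
        have h1' := Ideal.mul_mem_left _ (Polynomial.C t) h1
        constructor
        · have := Ideal.sub_mem _ (Ideal.mul_mem_left _ (Polynomial.X - Polynomial.C t) h1)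
            (Ideal.mul_mem_left _ (Polynomial.C t) h2)
          convert this using 1
          simp only [PP, Polynomial.C_pow]; ring
        · convert h1' using 1
          simp only [Polynomial.C_pow]; ring
    rw [PP_sum t f]
    refine Ideal.sum_mem _ fun b _ => ?_
    have hb := mem_UU.1 hf b
    generalize (PB t).repr f b = r at hb
    obtain ⟨i, hi, j, hj, rfl⟩ := Submodule.mem_sup.1 hb
    obtain ⟨c, rfl⟩ := Ideal.mem_span_singleton.1 hj
    rw [Polynomial.smul_eq_C_mul, Polynomial.C_add, add_mul]
    refine Ideal.add_mem _ (Ideal.mul_mem_right _ _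
      (Ideal.mem_sup_left (Ideal.mem_map_of_mem _ hi))) ?_
    have key : Polynomial.C (t ^ (2 * (s + 1 - b) - 1)) * PP t b ∈ JB I t (s + 1) := by
      rcases Nat.lt_or_ge s b with h | h
      · obtain ⟨j, rfl⟩ := Nat.exists_eq_add_of_le (show s + 1 ≤ b from h)
        exact Ideal.mul_mem_left _ _ (hup j).1
      · have := (hdown (s - b) b (by omega)).1
        rwa [show 2 * (s + 1 - b) - 1 = 2 * (s - b) + 1 by omega]
    have := Ideal.mul_mem_left _ (Polynomial.C c) key
    convert this using 1
    rw [Polynomial.C_mul]; ring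

lemma finrank_JB {k : Type*} [Field k] [Algebra k R] (I : Ideal R) (t : R) (e s : ℕ)
    (hs : 2 * s + 1 = 3 ^ e) (hfin : ∀ J : Ideal R, I ≤ J → Module.Finite k (R ⧸ J)) :
    Module.finrank k (R[X] ⧸ JB I t (s + 1)) =
      ∑ i ∈ Finset.range (s + 1), Module.finrank k (R ⧸ (I ⊔ Ideal.span {t ^ (2 * i + 1)})) := by
  let φ : R[X] →ₗ[R] (∀ b : Fin (s + 1), R ⧸ Kb I t (s + 1) b) :=
    LinearMap.pi fun b => (Submodule.mkQ (Kb I t (s + 1) b)) ∘ₗ (PB t).coord b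
  have hφ : ∀ f b, φ f b = Ideal.Quotient.mk _ ((PB t).repr f b) := fun f b => rfl
  have hsur : Function.Surjective φ := by
    intro v
    choose g hg using fun b => Ideal.Quotient.mk_surjective (v b)
    refine ⟨∑ b : Fin (s + 1), g b • PB t b, ?_⟩
    ext b
    rw [hφ, ← hg b]
    congr 1
    simp [Finsupp.single_apply, Fin.val_inj]
  have hker : ∀ f, φ f = 0 ↔ f ∈ JB I t (s + 1) := by
    intro f
    rw [JB_eq I t e s hs, mem_UU, funext_iff]
    simp only [hφ, Pi.zero_apply, Ideal.Quotient.eq_zero_iff_mem]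
    refine ⟨fun h b => ?_, fun h b => h b⟩
    rcases Nat.lt_or_ge b (s + 1) with hb | hb
    · exact h ⟨b, hb⟩
    · rw [Kb, show s + 1 - b = 0 by omega]
      exact Ideal.mem_sup_right (by simp)
  have hk : LinearMap.ker (φ.restrictScalars k) = (JB I t (s + 1)).restrictScalars k := by
    ext f
    rw [LinearMap.mem_ker, Submodule.restrictScalars_mem, ← hker]; rfl
  have e1 := LinearMap.quotKerEquivOfSurjective (φ.restrictScalars k) hsur
  rw [hk] at e1
  have e2 := (Submodule.Quotient.restrictScalarsEquiv k (JB I t (s + 1))).symm.trans e1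
  have hf : ∀ b : Fin (s + 1), Module.Finite k (R ⧸ Kb I t (s + 1) b) := fun b =>
    hfin _ le_sup_left
  rw [e2.finrank_eq, Module.finrank_pi_fintype, ← Finset.sum_range_reflect,
    Finset.sum_range]
  refine Finset.sum_congr rfl fun b _ => ?_
  rw [Kb, show 2 * (s + 1 - (b : ℕ)) - 1 = 2 * (s + 1 - 1 - b) + 1 by omega]

end lemB

section concav
variable {k : Type*} [Field k]

lemma rank_drop {V : Type*} [AddCommGroup V] [Module k V] [Module.Finite k V] (T : V →ₗ[k] V) (b : ℕ) :
    Module.finrank k (LinearMap.range (T ^ b)) +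
      ∑ j ∈ Finset.range b, Module.finrank k (LinearMap.ker T ⊓ LinearMap.range (T ^ j) : Submodule k V)
      = Module.finrank k V := by
  induction b with
  | zero =>
    have h0 : T ^ 0 = LinearMap.id := rfl
    rw [h0, LinearMap.range_id]; simp
  | succ b ih =>
    rw [Finset.sum_range_succ, ← ih]
    have h := LinearMap.finrank_range_add_finrank_ker (T.domRestrict (LinearMap.range (T ^ b)))
    have h1 : LinearMap.range (T.domRestrict (LinearMap.range (T ^ b))) = LinearMap.range (T ^ (b + 1)) := by
      rw [LinearMap.range_domRestrict, pow_succ', Module.End.mul_eq_comp, LinearMap.range_comp]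
    have h2 : Module.finrank k (LinearMap.ker (T.domRestrict (LinearMap.range (T ^ b)))) =
        Module.finrank k (LinearMap.ker T ⊓ LinearMap.range (T ^ b) : Submodule k V) := by
      rw [LinearMap.ker_domRestrict, ← Submodule.finrank_map_subtype_eq,
        Submodule.map_comap_subtype, inf_comm]
    rw [h1, h2] at h
    omega

lemma KI_sup {n : ℕ} (β : Fin n → ℕ) (f : MvPolynomial (Fin n) k) :
    KI β f = KI β 0 ⊔ Ideal.span {f} := by
  apply le_antisymm
  · rw [KI_le]
    exact ⟨fun i => Ideal.mem_sup_left (X_mem_KI _ _ i),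
      Ideal.mem_sup_right (Ideal.mem_span_singleton_self f)⟩
  · refine sup_le (KI_le.2 ⟨X_mem_KI _ _, by simp⟩) ?_
    rw [Ideal.span_singleton_le_iff_mem]; exact f_mem_KI _ _

lemma KK_range {n : ℕ} (β : Fin n → ℕ) (hβ : ∀ i, 0 < β i) (f : MvPolynomial (Fin n) k) :
    KK β f + Module.finrank k (LinearMap.range
      (LinearMap.mulLeft k (Ideal.Quotient.mk (KI (k := k) β 0) f))) =
      Module.finrank k (MvPolynomial (Fin n) k ⧸ KI (k := k) β 0) := by
  have := KI_finite (k := k) β hβ 0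
  set g := Ideal.Quotient.mk (KI (k := k) β 0) f
  have h1 : LinearMap.range (LinearMap.mulLeft k g) =
      (Ideal.span {g}).restrictScalars k := by
    ext x
    simp only [LinearMap.mem_range, LinearMap.mulLeft_apply, Submodule.restrictScalars_mem,
      Ideal.mem_span_singleton]
    exact ⟨fun ⟨y, h⟩ => ⟨y, h.symm⟩, fun ⟨y, h⟩ => ⟨y, h.symm⟩⟩
  rw [h1, ← Submodule.finrank_quotient_add_finrank ((Ideal.span {g}).restrictScalars k)]
  congr 1
  have e1 := DoubleQuot.quotQuotEquivQuotSupₐ k (KI (k := k) β 0) (Ideal.span {f})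
  rw [← KI_sup] at e1
  rw [KK, ← e1.toLinearEquiv.finrank_eq]
  have e2 : (Ideal.span {f}).map (Ideal.Quotient.mkₐ k (KI (k := k) β 0)) = Ideal.span {g} := by
    rw [Ideal.map_span, Set.image_singleton]; rfl
  rw [e2]
  exact (Submodule.Quotient.restrictScalarsEquiv k (Ideal.span {g})).symm.finrank_eq

lemma DD_concave {n : ℕ} (β : Fin n → ℕ) (hβ : ∀ i, 0 < β i) :
    ∃ r : ℕ → ℕ, Antitone r ∧ r 0 = DD k β ∧
      ∀ b, DD k (Fin.cons b β : Fin (n + 1) → ℕ) = ∑ j ∈ Finset.range b, r j := by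
  have := KI_finite (k := k) β hβ 0
  let T := LinearMap.mulLeft k (Ideal.Quotient.mk (KI (k := k) β 0) (ell k n))
  let r : ℕ → ℕ := fun j => Module.finrank k (LinearMap.ker T ⊓ LinearMap.range (T ^ j) : Submodule k _)
  have hr : ∀ b, DD k (Fin.cons b β : Fin (n + 1) → ℕ) = ∑ j ∈ Finset.range b, r j := by
    intro b
    have h1 := rank_drop T b
    have h2 := KK_range β hβ (ell k n ^ b)
    rw [map_pow, ← LinearMap.pow_mulLeft] at h2
    rw [DD_cons]
    change _ + Module.finrank k (LinearMap.range (T ^ b)) = _ at h2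
    change _ + ∑ j ∈ Finset.range b, r j = _ at h1
    omega
  refine ⟨r, antitone_nat_of_succ_le fun j => ?_, ?_, hr⟩
  · refine Submodule.finrank_mono (inf_le_inf_left _ ?_)
    rw [pow_succ, Module.End.mul_eq_comp]
    exact LinearMap.range_comp_le_range _ _
  · have := hr 1
    rw [DD_cons, pow_one] at this
    simpa [DD] using this.symm

end concav

section bb
variable {k : Type*} [Field k] [CharP k 3]

lemma DD_double {n : ℕ} (β : Fin n → ℕ) (hβ : ∀ i, 0 < β i) (e s : ℕ) (hs : 2 * s + 1 = 3 ^ e) :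
    DD k (Fin.cons (s + 1) (Fin.cons (s + 1) β : Fin (n + 1) → ℕ) : Fin (n + 2) → ℕ) =
      ∑ i ∈ Finset.range (s + 1), DD k (Fin.cons (2 * i + 1) β : Fin (n + 1) → ℕ) := by
  have hc : CharP (MvPolynomial (Fin n) k) 3 := inferInstance
  have h1 := finrank_JB (k := k) (KI (k := k) β 0) (ell k n) e s hs (by
    intro J hJ
    have := KI_finite (k := k) β hβ 0
    exact Module.Finite.of_surjective (Ideal.Quotient.factorₐ k hJ).toLinearMap
      (Ideal.Quotient.factor_surjective hJ))
  have h2 : ∀ i, KK β (ell k n ^ (2 * i + 1)) = Module.finrank k (MvPolynomial (Fin n) k ⧸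
      (KI (k := k) β 0 ⊔ Ideal.span {ell k n ^ (2 * i + 1)})) := fun i => by rw [KK, KI_sup]
  simp only [DD_cons, h2]
  rw [← h1]
  refine (Ideal.quotientEquivAlg _ _ (finSuccEquiv k n) ?_).toLinearEquiv.finrank_eq
  symm
  have hl : finSuccEquiv k n (ell k (n + 1)) = Polynomial.X + Polynomial.C (ell k n) := by
    simp only [ell, Fin.sum_univ_succ, map_add, map_sum, finSuccEquiv_X_zero, finSuccEquiv_X_succ]
  apply le_antisymm
  · rw [KI, Ideal.map_span, Ideal.span_le]
    rintro _ ⟨x, (⟨i, rfl⟩ | rfl), rfl⟩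
    · refine Fin.cases ?_ (fun i => ?_) i
      · refine Ideal.mem_sup_right (Ideal.subset_span ?_)
        left
        simp [finSuccEquiv_X_zero]
      · refine Ideal.mem_sup_left ?_
        have := Ideal.mem_map_of_mem (Polynomial.C) (X_mem_KI (k := k) β 0 i)
        simpa [finSuccEquiv_X_succ] using this
    · refine Ideal.mem_sup_right (Ideal.subset_span ?_)
      right
      simp [hl]
  · refine sup_le ?_ (Ideal.span_le.2 ?_)
    · rw [Ideal.map_le_iff_le_comap, KI_le]
      refine ⟨fun i => ?_, by simp⟩
      rw [Ideal.mem_comap]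
      have := Ideal.mem_map_of_mem ((finSuccEquiv k n : _ ≃ₐ[k] _) : _ →+* Polynomial (MvPolynomial (Fin n) k))
        (X_mem_KI (k := k) (Fin.cons (s + 1) β : Fin (n + 1) → ℕ) (ell k (n + 1) ^ (s + 1)) i.succ)
      simpa [finSuccEquiv_X_succ] using this
    · rintro _ (rfl | rfl)
      · have := Ideal.mem_map_of_mem ((finSuccEquiv k n : _ ≃ₐ[k] _) : _ →+* Polynomial (MvPolynomial (Fin n) k))
          (X_mem_KI (k := k) (Fin.cons (s + 1) β : Fin (n + 1) → ℕ) (ell k (n + 1) ^ (s + 1)) 0)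
        simpa [finSuccEquiv_X_zero] using this
      · have := Ideal.mem_map_of_mem ((finSuccEquiv k n : _ ≃ₐ[k] _) : _ →+* Polynomial (MvPolynomial (Fin n) k))
          (f_mem_KI (k := k) (Fin.cons (s + 1) β : Fin (n + 1) → ℕ) (ell k (n + 1) ^ (s + 1)))
        simpa [hl] using this

lemma DD_scale {n : ℕ} (b : ℕ) (β : Fin n → ℕ) (hβ : ∀ i, 0 < β i) :
    DD k (Fin.cons (3 * b) (fun i => 3 * β i) : Fin (n + 1) → ℕ) =
      3 ^ n * DD k (Fin.cons b β : Fin (n + 1) → ℕ) := by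
  have : Fact (Nat.Prime 3) := ⟨by norm_num⟩
  have hc : CharP (MvPolynomial (Fin n) k) 3 := inferInstance
  rw [DD_cons, DD_cons]
  have := KK_Er (k := k) (β := β) (r := fun _ => 3) hβ (by simp) (ell k n ^ b)
  simp only [Finset.prod_const, Finset.card_univ, Fintype.card_fin] at this
  rw [← this]
  congr 1
  rw [map_pow, pow_mul]
  congr 1
  rw [ell, sum_pow_char, map_sum]
  simp [Er]

lemma DD_two (b c : ℕ) (hc : 0 < c) : DD k (Fin.cons b (Fin.cons c Fin.elim0 : Fin 1 → ℕ) : Fin 2 → ℕ) = min b c := by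
  rw [DD_cons]
  have h := finrank_KI_zero (k := k) (fun _ : Fin 1 => min b c)
  have : KI (k := k) (Fin.cons c Fin.elim0 : Fin 1 → ℕ) (ell k 1 ^ b) = KI (fun _ : Fin 1 => min b c) 0 := by
    apply le_antisymm
    · rw [KI_le]
      have := X_mem_KI (k := k) (fun _ : Fin 1 => min b c) 0 0
      constructor
      · intro i
        rw [Fin.fin_one_eq_zero i]
        exact Ideal.mem_of_dvd _ (pow_dvd_pow _ (by simp)) this
      · simp only [ell, Finset.univ_unique, Fin.default_eq_zero, Finset.sum_singleton]
        exact Ideal.mem_of_dvd _ (pow_dvd_pow _ (by simp)) this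
    · rw [KI_le]
      refine ⟨fun i => ?_, by simp⟩
      rw [Fin.fin_one_eq_zero i]
      rcases le_total b c with hbc | hbc
      · rw [min_eq_left hbc]
        have := f_mem_KI (k := k) (Fin.cons c Fin.elim0 : Fin 1 → ℕ) (ell k 1 ^ b)
        simpa [ell] using this
      · rw [min_eq_right hbc]
        have := X_mem_KI (k := k) (Fin.cons c Fin.elim0 : Fin 1 → ℕ) (ell k 1 ^ b) 0
        simpa [ell] using this
  rcases Nat.eq_zero_or_pos b with hb | hb
  · subst hb
    rw [pow_zero]
    have h1 : KI (k := k) (Fin.cons c Fin.elim0 : Fin 1 → ℕ) 1 = ⊤ :=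
      (Ideal.eq_top_iff_one _).2 (f_mem_KI _ _)
    have : Subsingleton (MvPolynomial (Fin 1) k ⧸ KI (k := k) (Fin.cons c Fin.elim0 : Fin 1 → ℕ) 1) :=
      Ideal.Quotient.subsingleton_iff.2 h1
    rw [KK, Module.finrank_zero_of_subsingleton]; simp
  · rw [KK, this]
    have := (h (by intro i; exact lt_min hb hc)).2
    simpa [KK] using this

lemma DD_swap {n : ℕ} (b c : ℕ) (β : Fin n → ℕ) :
    DD k (Fin.cons b (Fin.cons c β : Fin (n + 1) → ℕ) : Fin (n + 2) → ℕ) =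
    DD k (Fin.cons c (Fin.cons b β : Fin (n + 1) → ℕ) : Fin (n + 2) → ℕ) := by
  rw [← DD_perm (Equiv.swap 0 1) (Fin.cons c (Fin.cons b β : Fin (n + 1) → ℕ) : Fin (n + 2) → ℕ)]
  congr 1
  ext i
  refine Fin.cases ?_ (fun i => Fin.cases ?_ (fun i => ?_) i) i
  · simp
  · simp
  · rw [Function.comp, Equiv.swap_apply_of_ne_of_ne]
    · rfl
    · exact Fin.succ_ne_zero _
    · intro h; exact Fin.succ_ne_zero _ (Fin.succ_injective _ h)

lemma DD_cons_congr {n : ℕ} (b : ℕ) {β γ : Fin n → ℕ} (σ : Equiv.Perm (Fin n)) (h : β ∘ σ = γ) :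
    DD k (Fin.cons b β : Fin (n + 1) → ℕ) = DD k (Fin.cons b γ : Fin (n + 1) → ℕ) := by
  rw [← DD_perm (Equiv.Perm.decomposeFin.symm (0, σ)) (Fin.cons b β : Fin (n + 1) → ℕ)]
  congr 1
  ext i
  refine Fin.cases ?_ (fun i => ?_) i
  · simp
  · simp [← h]

end bb

section strict
variable {k : Type*} [Field k] [CharP k 3]

lemma DD_le_prod {n : ℕ} (b : ℕ) (β : Fin n → ℕ) (hβ : ∀ i, 0 < β i) :
    DD k (Fin.cons b β : Fin (n + 1) → ℕ) ≤ ∏ i, β i := by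
  rw [DD_cons]; exact KK_le_prod hβ _

lemma DD_lip {n : ℕ} (c : ℕ) (β : Fin n → ℕ) (hβ : ∀ i, 0 < β i) :
    DD k (Fin.cons c β : Fin (n + 1) → ℕ) ≤ DD k (Fin.cons (c + 1) β : Fin (n + 1) → ℕ) ∧
    DD k (Fin.cons (c + 1) β : Fin (n + 1) → ℕ) ≤ DD k (Fin.cons c β : Fin (n + 1) → ℕ) + DD k β := by
  obtain ⟨r, hr, h0, h⟩ := DD_concave (k := k) β hβ
  rw [h, h, Finset.sum_range_succ, ← h0]
  have := hr (Nat.zero_le c)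
  omega

lemma anti_sum_ge {r : ℕ → ℕ} (hr : Antitone r) (m : ℕ) :
    m * r m ≤ ∑ j ∈ Finset.range m, r j := by
  have := Finset.card_nsmul_le_sum (Finset.range m) r (r m)
    (fun j hj => hr (Finset.mem_range.1 hj).le)
  simpa using this

lemma DD_conc1 {n : ℕ} (β : Fin n → ℕ) (hβ : ∀ i, 0 < β i) (m a : ℕ) (ha : 2 * a = 3 * m + 1) :
    2 * DD k (Fin.cons a β : Fin (n + 1) → ℕ) ≤ 3 * DD k (Fin.cons m β : Fin (n + 1) → ℕ) + DD k β := by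
  obtain ⟨r, hr, h0, h⟩ := DD_concave (k := k) β hβ
  obtain ⟨t, rfl⟩ := Nat.exists_eq_add_of_le (show m ≤ a by omega)
  rw [h, h, Finset.sum_range_add, ← h0]
  have h1 := anti_sum_ge hr m
  have h2 : ∑ j ∈ Finset.range t, r (m + j) ≤ t * r m := by
    have := Finset.sum_le_card_nsmul (Finset.range t) (fun j => r (m + j)) (r m)
      (fun j _ => hr (Nat.le_add_right m j))
    simpa using this
  have h3 : 2 * t = m + 1 := by omega
  have h4 := hr (Nat.zero_le m)
  have h5 : 2 * (t * r m) = m * r m + r m := by rw [← mul_assoc, h3]; ring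
  omega

lemma DD_cons_swap {n : ℕ} (x b c : ℕ) (β : Fin n → ℕ) :
    DD k (Fin.cons x (Fin.cons b (Fin.cons c β : Fin (n + 1) → ℕ) : Fin (n + 2) → ℕ) : Fin (n + 3) → ℕ) =
    DD k (Fin.cons x (Fin.cons c (Fin.cons b β : Fin (n + 1) → ℕ) : Fin (n + 2) → ℕ) : Fin (n + 3) → ℕ) := by
  apply DD_cons_congr x (Equiv.swap 0 1)
  ext i
  refine Fin.cases ?_ (fun i => Fin.cases ?_ (fun i => ?_) i) i
  · simp
  · simp
  · rw [Function.comp, Equiv.swap_apply_of_ne_of_ne]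
    · rfl
    · exact Fin.succ_ne_zero _
    · intro h; exact Fin.succ_ne_zero _ (Fin.succ_injective _ h)

lemma cons_const (n a : ℕ) : (Fin.cons a (fun _ : Fin n => a) : Fin (n + 1) → ℕ) = fun _ => a := by
  ext i; refine Fin.cases ?_ (fun i => ?_) i <;> simp

lemma DD_rec {n : ℕ} (b : ℕ) (hb : 0 < b) (e a : ℕ) (ha : 2 * a = 3 * 3 ^ e + 1) (β : Fin n → ℕ)
    (hβ : ∀ i, 0 < β i) :
    DD k (Fin.cons b (Fin.cons a (Fin.cons a β : Fin (n + 1) → ℕ) : Fin (n + 2) → ℕ) : Fin (n + 3) → ℕ) =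
    ∑ i ∈ Finset.range a, DD k (Fin.cons b (Fin.cons (2 * i + 1) β : Fin (n + 1) → ℕ) : Fin (n + 2) → ℕ) := by
  obtain ⟨s, rfl⟩ : ∃ s, a = s + 1 := ⟨a - 1, by omega⟩
  rw [DD_swap, DD_cons_swap, DD_double _ _ (e + 1) s (by rw [pow_succ]; omega)]
  · refine Finset.sum_congr rfl fun i _ => DD_swap _ _ _
  · intro i; refine Fin.cases ?_ (fun i => ?_) i
    · simpa using hb
    · simpa using hβ i

lemma window (n m a : ℕ) (Δ : ℕ → ℝ) (ε : ℝ) (hε : 0 < ε) (hε1 : ε ≤ 1) (ha : 2 * a = 3 * m + 1)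
    (hm : 1 ≤ m) (h1 : ∀ i, -(a : ℝ) ^ n ≤ Δ (2 * i + 1))
    (h2 : ∀ c, Δ (c + 1) - 3 * (a : ℝ) ^ n ≤ Δ c) (h3 : ε * (m : ℝ) ^ (n + 1) ≤ Δ a)
    (hM : ε / 2 + 2 ^ (n + 1) ≤ m * (ε / (6 * 2 ^ n) * ε / 8)) :
    ε / (6 * 2 ^ n) * ε / 8 * (m : ℝ) ^ (n + 2) ≤ ∑ i ∈ Finset.range a, Δ (2 * i + 1) := by
  set η : ℝ := ε / (6 * 2 ^ n) with hη
  have hη0 : 0 < η := by positivity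
  have hη1 : η ≤ 1 := by
    rw [hη, div_le_one (by positivity)]
    have : (1 : ℝ) ≤ 2 ^ n := one_le_pow₀ (by norm_num)
    linarith
  have hεη : ε = η * (6 * 2 ^ n) := by rw [hη]; field_simp
  have hmR : (1 : ℝ) ≤ m := by exact_mod_cast hm
  have haR : (a : ℝ) ≤ 2 * m := by
    have : a ≤ 2 * m := by omega
    exact_mod_cast this
  have han : (a : ℝ) ^ n ≤ 2 ^ n * (m : ℝ) ^ n := by
    rw [← mul_pow]; gcongr
  have hΔ : ∀ j, ∀ c, c + j = a → ε * (m : ℝ) ^ (n + 1) - 3 * (a : ℝ) ^ n * j ≤ Δ c := by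
    intro j
    induction j with
    | zero => intro c hc; simp at hc; subst hc; simpa using h3
    | succ j ih =>
      intro c hc
      have := ih (c + 1) (by omega)
      have := h2 c
      push_cast
      linarith
  set w : ℕ := ⌊η * m / 2⌋₊ with hw
  have hw1 : (w : ℝ) ≤ η * m / 2 := Nat.floor_le (by positivity)
  have hw2 : η * m / 2 < w + 1 := Nat.lt_floor_add_one _
  have hwm : 2 * w ≤ m := by
    have : (2 * w : ℝ) ≤ m := by nlinarith
    exact_mod_cast this
  set i0 := (a - 1) / 2 with hi0
  have hpt : ∀ i ∈ Finset.range a, (if i ∈ Finset.Ico (i0 + 1 - w) (i0 + 1) then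
      ε / 2 * (m : ℝ) ^ (n + 1) else 0) - 2 ^ n * (m : ℝ) ^ n ≤ Δ (2 * i + 1) := by
    intro i _
    split_ifs with hi
    · rw [Finset.mem_Ico] at hi
      obtain ⟨j, hj⟩ := Nat.exists_eq_add_of_le (show 2 * i + 1 ≤ a by omega)
      have hjw : j ≤ 2 * w := by omega
      have hjw' : (j : ℝ) ≤ 2 * w := by exact_mod_cast hjw
      have hjm : (j : ℝ) ≤ η * m := by linarith
      have h4 := hΔ j (2 * i + 1) hj.symm
      have h5 : 3 * (a : ℝ) ^ n * j ≤ 3 * (2 ^ n * (m : ℝ) ^ n) * (η * m) := by gcongr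
      have h6 : 3 * (2 ^ n * (m : ℝ) ^ n) * (η * m) = ε / 2 * (m : ℝ) ^ (n + 1) := by
        rw [hεη]; ring
      have : 0 ≤ 2 ^ n * (m : ℝ) ^ n := by positivity
      linarith
    · have := h1 i
      linarith
  have hsum := Finset.sum_le_sum hpt
  rw [Finset.sum_sub_distrib, Finset.sum_ite_mem, Finset.inter_eq_right.2 (by
    intro i hi
    rw [Finset.mem_Ico] at hi
    rw [Finset.mem_range]; omega), Finset.sum_const, Finset.sum_const, Nat.card_Ico,
    Finset.card_range, show i0 + 1 - (i0 + 1 - w) = w by omega, nsmul_eq_mul, nsmul_eq_mul] at hsum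
  refine le_trans ?_ hsum
  have h7 : (a : ℝ) * (2 ^ n * (m : ℝ) ^ n) ≤ 2 * m * (2 ^ n * (m : ℝ) ^ n) := by gcongr
  have h8 : (η * m / 2 - 1) * (ε / 2 * (m : ℝ) ^ (n + 1)) ≤ w * (ε / 2 * (m : ℝ) ^ (n + 1)) := by
    apply mul_le_mul_of_nonneg_right (by linarith) (by positivity)
  have h9 : (ε / 2 + 2 ^ (n + 1)) * (m : ℝ) ^ (n + 1) ≤ m * (η * ε / 8) * (m : ℝ) ^ (n + 1) := by
    gcongr
  have e1 : (η * m / 2 - 1) * (ε / 2 * (m : ℝ) ^ (n + 1)) - 2 * m * (2 ^ n * (m : ℝ) ^ n) -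
    η * ε / 8 * (m : ℝ) ^ (n + 2) = m * (η * ε / 8) * (m : ℝ) ^ (n + 1) -
      (ε / 2 + 2 ^ (n + 1)) * (m : ℝ) ^ (n + 1) := by ring
  linarith

variable (k) in
lemma E_pos (n : ℕ) : ∃ ε M : ℝ, 0 < ε ∧ ε ≤ 1 ∧ ∀ e a : ℕ, 2 * a = 3 * 3 ^ e + 1 → M ≤ (3 : ℝ) ^ e →
    ε * ((3 : ℝ) ^ e) ^ (n + 2) ≤
      3 * (DD k (Fin.cons (3 ^ e) (fun _ : Fin (n + 2) => a) : Fin (n + 3) → ℕ) : ℝ) -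
      2 * (DD k (Fin.cons a (fun _ : Fin (n + 2) => a) : Fin (n + 3) → ℕ) : ℝ) := by
  induction n with
  | zero =>
    refine ⟨1 / 8, 9, by norm_num, by norm_num, ?_⟩
    intro e a ha hM
    have hM' : 9 ≤ 3 ^ e := by exact_mod_cast hM
    have hodd : Odd (3 ^ e) := Odd.pow (by decide)
    have hF : ∀ b, 0 < b → DD k (Fin.cons b (fun _ : Fin 2 => a) : Fin 3 → ℕ) =
        ∑ i ∈ Finset.range a, min b (2 * i + 1) := by
      intro b hb
      have := DD_rec (k := k) (n := 0) b hb e a ha Fin.elim0 (fun i => i.elim0)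
      simp only [DD_two _ (2 * _ + 1) (Nat.succ_pos _)] at this
      rw [← this]
      congr 2
      ext i
      fin_cases i <;> rfl
    rw [show (3 : ℝ) ^ e = ((3 ^ e : ℕ) : ℝ) by push_cast; rfl]
    rw [hF _ (by omega), hF _ (by omega)]
    generalize 3 ^ e = m at *
    obtain ⟨h, rfl⟩ := hodd
    obtain rfl : a = 3 * h + 2 := by omega
    have hpt : ∀ i ∈ Finset.range (3 * h + 2), (if i ∈ Finset.range (h + 1) then (2 * i + 1 : ℤ) else 0) - 1
        ≤ 3 * (min (2 * h + 1) (2 * i + 1) : ℕ) - 2 * (min (3 * h + 2) (2 * i + 1) : ℕ) := by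
      intro i _
      split_ifs with hi
      · rw [Finset.mem_range] at hi; omega
      · rw [Finset.mem_range] at hi; omega
    have hs := Finset.sum_le_sum hpt
    rw [Finset.sum_sub_distrib, Finset.sum_ite_mem, Finset.inter_eq_right.2 (by
      intro i hi
      rw [Finset.mem_range] at hi ⊢; omega), Finset.sum_sub_distrib, ← Finset.mul_sum, ← Finset.mul_sum] at hs
    have hsq : ∀ h : ℕ, ∑ i ∈ Finset.range h, (2 * i + 1 : ℤ) = h ^ 2 := by
      intro h
      induction h with
      | zero => simp
      | succ h ih => rw [Finset.sum_range_succ, ih]; push_cast; ring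
    rw [hsq] at hs
    simp only [Finset.sum_const, Finset.card_range, nsmul_eq_mul] at hs
    have hsR : (((h + 1 : ℕ) : ℝ) ^ 2 - ((3 * h + 2 : ℕ) : ℝ) * 1) ≤
       3 * ((∑ i ∈ Finset.range (3 * h + 2), min (2 * h + 1) (2 * i + 1) : ℕ) : ℝ) -
       2 * ((∑ i ∈ Finset.range (3 * h + 2), min (3 * h + 2) (2 * i + 1) : ℕ) : ℝ) := by
      exact_mod_cast hs
    refine le_trans ?_ hsR
    have : (4 : ℝ) ≤ h := by
      have : 4 ≤ h := by omega
      exact_mod_cast this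
    push_cast
    nlinarith
  | succ n ih =>
    obtain ⟨ε, M, hε, hε1, H⟩ := ih
    refine ⟨ε / (6 * 2 ^ (n + 1)) * ε / 8,
      max M ((ε / 2 + 2 ^ (n + 1 + 1)) / (ε / (6 * 2 ^ (n + 1)) * ε / 8)), by positivity, ?_, ?_⟩
    · have h1 : (1 : ℝ) ≤ 2 ^ (n + 1) := one_le_pow₀ (by norm_num)
      have h2 : ε / (6 * 2 ^ (n + 1)) ≤ 1 := by
        rw [div_le_one (by positivity)]; linarith
      have h3 : 0 < ε / (6 * 2 ^ (n + 1)) := by positivity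
      nlinarith
    · intro e a ha hM
      have hm0 : 0 < 3 ^ e := by positivity
      have ha0 : 0 < a := by omega
      have hcast : (3 : ℝ) ^ e = ((3 ^ e : ℕ) : ℝ) := by push_cast; rfl
      have Hn := H e a ha ((le_max_left _ _).trans hM)
      have hM2 := (le_max_right _ _).trans hM
      rw [div_le_iff₀ (by positivity)] at hM2
      rw [hcast] at Hn hM2 ⊢
      generalize hm : 3 ^ e = m at *
      have hc : ∀ c, 0 < c → ∀ i : Fin (n + 2), 0 < (Fin.cons c (fun _ : Fin (n + 1) => a) : Fin (n + 2) → ℕ) i := by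
        intro c hc i
        refine Fin.cases ?_ (fun i => ?_) i
        · simpa using hc
        · simpa using ha0
      have hpr : ∀ c, DD k (Fin.cons c (fun _ : Fin (n + 1) => a) : Fin (n + 2) → ℕ) ≤ a ^ (n + 1) := by
        intro c
        have := DD_le_prod (k := k) c (fun _ : Fin (n + 1) => a) (fun _ => ha0)
        simpa using this
      have := window (n + 1) m a (fun c =>
        3 * (DD k (Fin.cons m (Fin.cons c (fun _ : Fin (n + 1) => a) : Fin (n + 2) → ℕ) : Fin (n + 3) → ℕ) : ℝ) -
        2 * (DD k (Fin.cons a (Fin.cons c (fun _ : Fin (n + 1) => a) : Fin (n + 2) → ℕ) : Fin (n + 3) → ℕ) : ℝ))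
        ε hε hε1 ha (by omega) ?_ ?_ ?_ hM2
      · refine this.trans (le_of_eq ?_)
        rw [Finset.sum_sub_distrib, ← Finset.mul_sum, ← Finset.mul_sum]
        have hr : ∀ b, 0 < b → DD k (Fin.cons b (fun _ : Fin (n + 1 + 2) => a) : Fin (n + 4) → ℕ) =
          ∑ i ∈ Finset.range a, DD k (Fin.cons b (Fin.cons (2 * i + 1) (fun _ : Fin (n + 1) => a) : Fin (n + 2) → ℕ) : Fin (n + 3) → ℕ) := by
          intro b hb
          rw [← DD_rec b hb e a (by rw [hm]; exact ha) _ (fun _ => ha0), cons_const, cons_const]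
        rw [hr m hm0, hr a ha0]
        push_cast
        rfl
      · intro i
        have h1 := DD_conc1 (k := k) _ (hc (2 * i + 1) (by omega)) m a ha
        have h2 := hpr (2 * i + 1)
        have h3 : 2 * (DD k (Fin.cons a (Fin.cons (2 * i + 1) (fun _ : Fin (n + 1) => a) : Fin (n + 2) → ℕ) : Fin (n + 3) → ℕ)) ≤
          3 * (DD k (Fin.cons m (Fin.cons (2 * i + 1) (fun _ : Fin (n + 1) => a) : Fin (n + 2) → ℕ) : Fin (n + 3) → ℕ)) + a ^ (n + 1) := by omega
        have h4 : 2 * (DD k (Fin.cons a (Fin.cons (2 * i + 1) (fun _ : Fin (n + 1) => a) : Fin (n + 2) → ℕ) : Fin (n + 3) → ℕ) : ℝ) ≤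
          3 * (DD k (Fin.cons m (Fin.cons (2 * i + 1) (fun _ : Fin (n + 1) => a) : Fin (n + 2) → ℕ) : Fin (n + 3) → ℕ) : ℝ) + a ^ (n + 1) := by exact_mod_cast h3
        linarith
      · intro c
        have h1 := (DD_lip (k := k) c _ (hc m hm0)).2
        have h2 := (DD_lip (k := k) c _ (hc a ha0)).1
        have h3 := hpr m
        rw [DD_swap (c + 1), DD_swap c] at h1 h2
        have h4 := h1.trans (Nat.add_le_add_left h3 _)
        have h4' : (DD k (Fin.cons m (Fin.cons (c + 1) (fun _ : Fin (n + 1) => a) : Fin (n + 2) → ℕ) : Fin (n + 3) → ℕ) : ℝ) ≤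
          (DD k (Fin.cons m (Fin.cons c (fun _ : Fin (n + 1) => a) : Fin (n + 2) → ℕ) : Fin (n + 3) → ℕ) : ℝ) + a ^ (n + 1) := by
          exact_mod_cast h4
        have h2' : (DD k (Fin.cons a (Fin.cons c (fun _ : Fin (n + 1) => a) : Fin (n + 2) → ℕ) : Fin (n + 3) → ℕ) : ℝ) ≤
          (DD k (Fin.cons a (Fin.cons (c + 1) (fun _ : Fin (n + 1) => a) : Fin (n + 2) → ℕ) : Fin (n + 3) → ℕ) : ℝ) := by
          exact_mod_cast h2
        linarith
      · simp only [cons_const (n + 1)]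
        exact Hn

end strict

section lims
variable {k : Type*} [Field k] [CharP k 3]

lemma DD_raise1 {n : ℕ} (γ : Fin (n + 1) → ℕ) (hγ : ∀ i, 0 < γ i) (i : Fin (n + 1)) :
    γ i * DD k (Function.update γ i (γ i + 1)) ≤ (γ i + 1) * DD k γ := by
  rw [← DD_perm (Equiv.swap 0 i) γ, ← DD_perm (Equiv.swap 0 i) (Function.update γ i (γ i + 1))]
  have h1 : γ ∘ Equiv.swap 0 i = Fin.cons (γ i) (Fin.tail (γ ∘ Equiv.swap 0 i)) := by
    ext j
    refine Fin.cases ?_ (fun j => ?_) j <;> simp [Fin.tail]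
  have h2 : Function.update γ i (γ i + 1) ∘ Equiv.swap 0 i =
      Fin.cons (γ i + 1) (Fin.tail (γ ∘ Equiv.swap 0 i)) := by
    ext j
    refine Fin.cases ?_ (fun j => ?_) j
    · simp
    · have : Equiv.swap 0 i j.succ ≠ i := by
        intro h
        have h' : Equiv.swap 0 i j.succ = Equiv.swap 0 i 0 := by rw [h, Equiv.swap_apply_left]
        exact Fin.succ_ne_zero _ ((Equiv.swap 0 i).injective h')
      rw [Function.comp, Function.update_of_ne this]
      simp [Fin.tail]
  rw [h1, h2]
  obtain ⟨r, hr, -, h⟩ := DD_concave (k := k) (Fin.tail (γ ∘ Equiv.swap 0 i)) (fun j => hγ _)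
  rw [h, h, Finset.sum_range_succ]
  have := anti_sum_ge hr (γ i)
  nlinarith

lemma DD_raise {n : ℕ} (β : Fin (n + 1) → ℕ) (hβ : ∀ i, 0 < β i) (c : ℕ) (s : Finset (Fin (n + 1)))
    (hs : ∀ i ∈ s, β i = c) :
    c ^ s.card * DD k (fun i => if i ∈ s then c + 1 else β i) ≤ (c + 1) ^ s.card * DD k β := by
  induction s using Finset.induction_on with
  | empty => simp
  | insert i s hi ih =>
    have ih := ih (fun j hj => hs j (Finset.mem_insert_of_mem hj))
    rw [Finset.card_insert_of_notMem hi]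
    have h1 := DD_raise1 (k := k) (fun i => if i ∈ s then c + 1 else β i) (by
      intro j; split_ifs
      · omega
      · exact hβ j) i
    simp only [hi, if_false, hs i (Finset.mem_insert_self _ _)] at h1
    have h2 : (fun j => if j ∈ insert i s then c + 1 else β j) =
      Function.update (fun i => if i ∈ s then c + 1 else β i) i (c + 1) := by
      ext j
      by_cases hj : j = i
      · subst hj; simp
      · simp [hj]
    rw [h2]
    calc _ = c ^ s.card * (c * DD k (Function.update (fun i => if i ∈ s then c + 1 else β i) i (c + 1))) := by ring
      _ ≤ c ^ s.card * ((c + 1) * DD k (fun i => if i ∈ s then c + 1 else β i)) :=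
          Nat.mul_le_mul_left _ h1
      _ = (c + 1) * (c ^ s.card * DD k (fun i => if i ∈ s then c + 1 else β i)) := by ring
      _ ≤ (c + 1) * ((c + 1) ^ s.card * DD k β) := Nat.mul_le_mul_left _ ih
      _ = _ := by ring

lemma DD_snoc {n : ℕ} (b : ℕ) (β : Fin n → ℕ) :
    DD k (Fin.snoc β b : Fin (n + 1) → ℕ) = DD k (Fin.cons b β : Fin (n + 1) → ℕ) := by
  rw [← DD_perm (finRotate (n + 1)) (Fin.cons b β : Fin (n + 1) → ℕ)]
  congr 1
  ext i
  refine Fin.lastCases ?_ (fun i => ?_) i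
  · simp
  · rw [Fin.snoc_castSucc, Function.comp, finRotate_of_lt (by simp)]
    exact (Fin.cons_succ (α := fun _ => ℕ) b β i).symm

/-- sandwich for A1 -/
lemma HKR_bounds (d e a : ℕ) (ha : 2 * a = 3 * 3 ^ e + 1) :
    KK (fun _ => 3 ^ (e + 1)) (∑ i : Fin (d + 1), (X i : MvPolynomial (Fin (d + 1)) k) ^ 2) ≤
      2 ^ (d + 1) * DD k (Fin.cons a (fun _ : Fin d => a) : Fin (d + 1) → ℕ) ∧
    2 ^ (d + 1) * ((a - 1) ^ (d + 1) * DD k (Fin.cons a (fun _ : Fin d => a) : Fin (d + 1) → ℕ)) ≤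
      a ^ (d + 1) *
      KK (fun _ => 3 ^ (e + 1)) (∑ i : Fin (d + 1), (X i : MvPolynomial (Fin (d + 1)) k) ^ 2) := by
  have hm : 0 < 3 ^ e := by positivity
  have hf : (∑ i : Fin (d + 1), (X i : MvPolynomial (Fin (d + 1)) k) ^ 2) =
      Er k (fun _ => 2) (ell k (d + 1)) := by
    simp [ell, Er]
  have hE : ∀ c, 0 < c → KK (fun _ => 2 * c) (Er k (fun _ => 2) (ell k (d + 1))) =
      2 ^ (d + 1) * DD k (fun _ : Fin (d + 1) => c) := by
    intro c hc
    have := KK_Er (k := k) (β := fun _ : Fin (d + 1) => c) (r := fun _ => 2) (fun _ => hc)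
      (by simp) (ell k (d + 1))
    simpa [DD] using this
  rw [hf, cons_const]
  have hp : 3 ^ (e + 1) = 3 * 3 ^ e := by ring
  constructor
  · rw [← hE a (by omega)]
    apply KK_mono <;> intro i <;> omega
  · have h1 := DD_raise (k := k) (fun _ : Fin (d + 1) => a - 1) (by intro i; omega) (a - 1)
      Finset.univ (by simp)
    simp only [Finset.mem_univ, if_true, Finset.card_univ, Fintype.card_fin,
      show a - 1 + 1 = a by omega] at h1
    calc _ ≤ 2 ^ (d + 1) * (a ^ (d + 1) * DD k (fun _ : Fin (d + 1) => a - 1)) :=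
          Nat.mul_le_mul_left _ h1
      _ = a ^ (d + 1) * (2 ^ (d + 1) * DD k (fun _ : Fin (d + 1) => a - 1)) := by ring
      _ ≤ _ := by
          apply Nat.mul_le_mul_left
          rw [← hE (a - 1) (by omega)]
          apply KK_mono <;> intro i <;> omega

/-- sandwich for A2 -/
lemma HKS_bounds (d e a : ℕ) (ha : 2 * a = 3 * 3 ^ e + 1) :
    KK (fun _ => 3 ^ (e + 1)) ((∑ i : Fin d, (X (i.castSucc) : MvPolynomial (Fin (d + 1)) k) ^ 2) +
                X (Fin.last d) ^ 3) ≤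
      (2 ^ d * 3) * DD k (Fin.cons (3 ^ e) (fun _ : Fin d => a) : Fin (d + 1) → ℕ) ∧
    (2 ^ d * 3) * ((a - 1) ^ d * DD k (Fin.cons (3 ^ e) (fun _ : Fin d => a) : Fin (d + 1) → ℕ)) ≤
      a ^ d *
      KK (fun _ => 3 ^ (e + 1)) ((∑ i : Fin d, (X (i.castSucc) : MvPolynomial (Fin (d + 1)) k) ^ 2) +
                X (Fin.last d) ^ 3) := by
  have hm : 0 < 3 ^ e := by positivity
  let r : Fin (d + 1) → ℕ := Fin.snoc (fun _ : Fin d => 2) 3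
  have hf : ((∑ i : Fin d, (X (i.castSucc) : MvPolynomial (Fin (d + 1)) k) ^ 2) +
                X (Fin.last d) ^ 3) =
      Er k r (ell k (d + 1)) := by
    simp [ell, Er, Fin.sum_univ_castSucc, r]
  have hsn : ∀ c, (fun i => r i * (Fin.snoc (fun _ : Fin d => c) (3 ^ e) : Fin (d + 1) → ℕ) i) =
      (Fin.snoc (fun _ : Fin d => 2 * c) (3 * 3 ^ e) : Fin (d + 1) → ℕ) := by
    intro c; ext i
    refine Fin.lastCases ?_ (fun i => ?_) i <;> simp [r]
  have hE : ∀ c, 0 < c → KK (Fin.snoc (fun _ : Fin d => 2 * c) (3 * 3 ^ e) : Fin (d + 1) → ℕ) (Er k r (ell k (d + 1))) =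
      (2 ^ d * 3) * DD k (Fin.snoc (fun _ : Fin d => c) (3 ^ e) : Fin (d + 1) → ℕ) := by
    intro c hc
    have := KK_Er (k := k) (β := (Fin.snoc (fun _ : Fin d => c) (3 ^ e) : Fin (d + 1) → ℕ)) (r := r) (by
        intro i
        refine Fin.lastCases ?_ (fun i => ?_) i
        · simp
        · simpa using hc) (by
        intro i
        refine Fin.lastCases ?_ (fun i => ?_) i <;> simp [r]) (ell k (d + 1))
    rw [hsn, Fin.prod_univ_castSucc] at this
    simpa [DD, r] using this
  have hpos : ∀ b c, 0 < b → 0 < c → ∀ i, 0 < (Fin.snoc (fun _ : Fin d => c) b : Fin (d + 1) → ℕ) i := by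
    intro b c hb hc i
    refine Fin.lastCases ?_ (fun i => ?_) i
    · simpa using hb
    · simpa using hc
  rw [hf, ← DD_snoc]
  have hp : 3 ^ (e + 1) = 3 * 3 ^ e := by ring
  constructor
  · rw [← hE a (by omega)]
    apply KK_mono
    · intro i
      refine Fin.lastCases ?_ (fun i => ?_) i
      · simp; omega
      · simp; omega
    · apply hpos <;> omega
  · have h1 := DD_raise (k := k) (Fin.snoc (fun _ : Fin d => a - 1) (3 ^ e) : Fin (d + 1) → ℕ)
      (by apply hpos <;> omega) (a - 1)
      (Finset.univ.map Fin.castSuccEmb) (by simp)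
    have h2 : (fun i => if i ∈ Finset.univ.map Fin.castSuccEmb then a - 1 + 1 else
        (Fin.snoc (fun _ : Fin d => a - 1) (3 ^ e) : Fin (d + 1) → ℕ) i) =
        (Fin.snoc (fun _ : Fin d => a) (3 ^ e) : Fin (d + 1) → ℕ) := by
      ext i
      refine Fin.lastCases ?_ (fun i => ?_) i
      · simp [Fin.castSucc_ne_last]
      · simp; omega
    rw [h2] at h1
    simp only [Finset.card_map, Finset.card_univ, Fintype.card_fin,
      show a - 1 + 1 = a by omega] at h1
    calc _ ≤ (2 ^ d * 3) * (a ^ d * DD k (Fin.snoc (fun _ : Fin d => a - 1) (3 ^ e) : Fin (d + 1) → ℕ)) :=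
          Nat.mul_le_mul_left _ h1
      _ = a ^ d * ((2 ^ d * 3) * DD k (Fin.snoc (fun _ : Fin d => a - 1) (3 ^ e) : Fin (d + 1) → ℕ)) := by ring
      _ ≤ _ := by
          apply Nat.mul_le_mul_left
          rw [← hE (a - 1) (by omega)]
          apply KK_mono
          · intro i
            refine Fin.lastCases ?_ (fun i => ?_) i
            · simp; omega
            · simp; omega
          · intro i; omega

def aa (e : ℕ) : ℕ := (3 * 3 ^ e + 1) / 2

lemma two_aa (e : ℕ) : 2 * aa e = 3 * 3 ^ e + 1 := by
  have : Odd (3 ^ e) := Odd.pow (by decide)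
  obtain ⟨h, hh⟩ := this
  rw [aa]; omega

lemma conv_of_le (u : ℕ → ℕ) (d : ℕ) (h : ∀ e, u (e + 1) ≤ 3 ^ d * u e) :
    ∃ L : ℝ, Filter.Tendsto (fun e => (u e : ℝ) / (3 ^ e) ^ d) Filter.atTop (nhds L) := by
  refine ⟨_, tendsto_atTop_ciInf (antitone_nat_of_succ_le fun e => ?_) ⟨0, ?_⟩⟩
  · rw [div_le_div_iff₀ (by positivity) (by positivity)]
    have : (u (e + 1) : ℝ) ≤ 3 ^ d * u e := by exact_mod_cast h e
    calc (u (e + 1) : ℝ) * (3 ^ e) ^ d ≤ (3 ^ d * u e) * (3 ^ e) ^ d := by gcongr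
      _ = u e * (3 ^ (e + 1)) ^ d := by rw [pow_succ, mul_pow]; ring
  · rintro _ ⟨e, rfl⟩
    positivity

lemma DD_mono {n : ℕ} {β γ : Fin n → ℕ} (h : ∀ i, β i ≤ γ i) (hγ : ∀ i, 0 < γ i) : DD k β ≤ DD k γ :=
  KK_mono h hγ _

lemma conv_gen (d : ℕ) (b : ℕ → ℕ) (hb : ∀ e, b (e + 1) ≤ 3 * b e) (hb0 : ∀ e, 0 < b e) :
    ∃ L : ℝ, Filter.Tendsto (fun e => (DD k (Fin.cons (b e) (fun _ : Fin d => aa e) : Fin (d + 1) → ℕ) : ℝ)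
      / (3 ^ e) ^ d) Filter.atTop (nhds L) := by
  apply conv_of_le
  intro e
  have h1 := two_aa e
  have h2 := two_aa (e + 1)
  rw [pow_succ] at h2
  rw [← DD_scale _ _ (by intro i; omega)]
  have := hb0 e
  apply DD_mono
  · intro i
    refine Fin.cases ?_ (fun i => ?_) i
    · simpa using hb e
    · simp; omega
  · intro i
    refine Fin.cases ?_ (fun i => ?_) i
    · simpa using hb0 e
    · simp; omega

lemma aa_ratio (j : ℕ) : Filter.Tendsto (fun e => (((aa e - 1 : ℕ) : ℝ) / aa e) ^ j) Filter.atTop (nhds 1) := by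
  have h1 : Filter.Tendsto (fun e => (aa e : ℝ)) Filter.atTop Filter.atTop := by
    refine Filter.tendsto_atTop_mono (f := fun e : ℕ => (e : ℝ)) (fun e => ?_) tendsto_natCast_atTop_atTop
    have h1 := two_aa e
    have h2 : e < 3 ^ e := Nat.lt_pow_self (by norm_num)
    have : e ≤ aa e := by omega
    exact_mod_cast this
  have h2 : Filter.Tendsto (fun e => (1 - ((aa e : ℝ))⁻¹) ^ j) Filter.atTop (nhds ((1 - 0) ^ j)) :=
    (tendsto_const_nhds.sub h1.inv_tendsto_atTop).pow j
  simp only [sub_zero, one_pow] at h2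
  refine h2.congr fun e => ?_
  have h3 : 0 < aa e := by have := two_aa e; omega
  have h3' : (aa e : ℝ) ≠ 0 := by positivity
  rw [Nat.cast_sub (by omega), sub_div, div_self h3', Nat.cast_one, one_div]

lemma squeeze_lim (d j : ℕ) (K : ℕ) (u D : ℕ → ℕ) (L : ℝ)
    (hD : Filter.Tendsto (fun e => (D e : ℝ) / (3 ^ e) ^ d) Filter.atTop (nhds L))
    (h : ∀ e, u (e + 1) ≤ K * D e ∧ K * ((aa e - 1) ^ j * D e) ≤ aa e ^ j * u (e + 1)) :
    Filter.Tendsto (fun e => (u e : ℝ) / 3 ^ (d * e)) Filter.atTop (nhds (K * L / 3 ^ d)) := by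
  rw [← Filter.tendsto_add_atTop_iff_nat 1]
  have hu : Filter.Tendsto (fun e => K * ((D e : ℝ) / (3 ^ e) ^ d) / 3 ^ d) Filter.atTop (nhds (K * L / 3 ^ d)) :=
    (hD.const_mul _).div_const _
  have hl := (aa_ratio j).mul hu
  rw [one_mul] at hl
  have hp : ∀ e, (3 : ℝ) ^ (d * (e + 1)) = (3 ^ e) ^ d * 3 ^ d := by
    intro e; rw [← pow_mul, mul_comm e d, mul_add, pow_add, mul_one]
  refine tendsto_of_tendsto_of_tendsto_of_le_of_le hl hu (fun e => ?_) (fun e => ?_)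
  · have h3 : 0 < aa e := by have := two_aa e; omega
    have h3' : (0 : ℝ) < aa e := by positivity
    have h1 : (K : ℝ) * (((aa e - 1 : ℕ) : ℝ) ^ j * D e) ≤ (aa e : ℝ) ^ j * u (e + 1) := by
      exact_mod_cast (h e).2
    dsimp only
    rw [hp, div_pow, le_div_iff₀ (by positivity)]
    have : ((aa e - 1 : ℕ) : ℝ) ^ j / (aa e : ℝ) ^ j * (K * ((D e : ℝ) / (3 ^ e) ^ d) / 3 ^ d) * ((3 ^ e) ^ d * 3 ^ d)
      = (K : ℝ) * (((aa e - 1 : ℕ) : ℝ) ^ j * D e) / (aa e : ℝ) ^ j := by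
      field_simp
    rw [this, div_le_iff₀ (by positivity)]
    linarith
  · have h1 : (u (e + 1) : ℝ) ≤ K * D e := by exact_mod_cast (h e).1
    dsimp only
    rw [hp]
    have : K * ((D e : ℝ) / (3 ^ e) ^ d) / 3 ^ d = K * D e / ((3 ^ e) ^ d * 3 ^ d) := by field_simp
    rw [this]
    gcongr

lemma main_aux (k : Type*) [Field k] [CharP k 3] (d : ℕ) (hd : 2 ≤ d) :
    ∃ L_R L_S : ℝ,
      Filter.Tendsto
        (fun e : ℕ =>
          (KK (fun _ => 3 ^ e) (∑ i : Fin (d + 1), (X i : MvPolynomial (Fin (d + 1)) k) ^ 2) : ℝ) / 3 ^ (d * e))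
        Filter.atTop (nhds L_R) ∧
      Filter.Tendsto
        (fun e : ℕ =>
          (KK (fun _ => 3 ^ e)
              ((∑ i : Fin d, (X (i.castSucc) : MvPolynomial (Fin (d + 1)) k) ^ 2) +
                X (Fin.last d) ^ 3) : ℝ) / 3 ^ (d * e))
        Filter.atTop (nhds L_S) ∧
      L_S > L_R := by
  obtain ⟨LA, hA⟩ := conv_gen (k := k) d aa (fun e => by
    have h1 := two_aa e
    have h2 := two_aa (e + 1)
    rw [pow_succ] at h2
    omega) (fun e => by have := two_aa e; omega)
  obtain ⟨LB, hB⟩ := conv_gen (k := k) d (fun e => 3 ^ e) (fun e => by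
    rw [pow_succ]; omega) (fun e => by positivity)
  refine ⟨_, _, squeeze_lim d (d + 1) (2 ^ (d + 1))
      (fun e => KK (fun _ => 3 ^ e) (∑ i : Fin (d + 1), (X i : MvPolynomial (Fin (d + 1)) k) ^ 2)) _ LA hA
      (fun e => HKR_bounds d e (aa e) (two_aa e)),
    squeeze_lim d d (2 ^ d * 3)
      (fun e => KK (fun _ => 3 ^ e) ((∑ i : Fin d, (X (i.castSucc) : MvPolynomial (Fin (d + 1)) k) ^ 2) +
                X (Fin.last d) ^ 3)) _ LB hB
      (fun e => HKS_bounds d e (aa e) (two_aa e)), ?_⟩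
  obtain ⟨n, rfl⟩ : ∃ n, d = n + 2 := ⟨d - 2, by omega⟩
  obtain ⟨ε, M, hε, -, H⟩ := E_pos k n
  have key : ε ≤ 3 * LB - 2 * LA := by
    refine ge_of_tendsto ((hB.const_mul 3).sub (hA.const_mul 2)) ?_
    have : Filter.Tendsto (fun e : ℕ => (3 : ℝ) ^ e) Filter.atTop Filter.atTop :=
      tendsto_pow_atTop_atTop_of_one_lt (by norm_num)
    filter_upwards [this.eventually_ge_atTop M] with e he
    have h := H e (aa e) (two_aa e) he
    rw [← mul_div_assoc, ← mul_div_assoc, ← sub_div, le_div_iff₀ (by positivity)]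
    exact h
  have h3 : (0 : ℝ) < 3 ^ (n + 2) := by positivity
  push_cast
  rw [gt_iff_lt, div_lt_div_iff_of_pos_right h3]
  have h2 : (0 : ℝ) < 2 ^ (n + 2) := by positivity
  have : (2 : ℝ) ^ (n + 2) * 3 * LB - 2 ^ (n + 2 + 1) * LA = 2 ^ (n + 2) * (3 * LB - 2 * LA) := by ring
  have : 0 < (2 : ℝ) ^ (n + 2) * (3 * LB - 2 * LA) := mul_pos h2 (by linarith)
  linarith

end lims

end HKA

/-- In characteristic 3, the Hilbert–Kunz multiplicities of the `A₁` singularity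
(defined by `x_0² + ⋯ + x_d²`) and of the `A₂` singularity
(defined by `x_0² + ⋯ + x_{d−1}² + x_d³`) exist, and `e_HK(S_{3,d}) > e_HK(R_{3,d})`. -/
theorem eHK_A2_gt_A1_char_three (k : Type*) [Field k] [CharP k 3] (d : ℕ) (hd : 2 ≤ d) :
    ∃ L_R L_S : ℝ,
      Filter.Tendsto
        (fun e : ℕ =>
          (HKfun k (d + 1) 3 e (∑ i : Fin (d + 1), X i ^ 2) : ℝ) / 3 ^ (d * e))
        Filter.atTop (nhds L_R) ∧
      Filter.Tendsto
        (fun e : ℕ =>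
          (HKfun k (d + 1) 3 e
              ((∑ i : Fin d, (X (i.castSucc) : MvPolynomial (Fin (d + 1)) k) ^ 2) +
                X (Fin.last d) ^ 3) : ℝ) / 3 ^ (d * e))
        Filter.atTop (nhds L_S) ∧
      L_S > L_R := by
  exact HKA.main_aux k d hd
end

section
/- Let k be a field of characteristic 2 and d ≥ 2. Then there exist real numbers L_R and L_S such that the sequence e ↦ dim_k( k[x_0,…,x_d]/(x_0^{2^e},…,x_d^{2^e}, Q_d) ) / 2^{d·e} converges to L_R, the sequence e ↦ dim_k( k[x_0,…,x_d]/(x_0^{2^e},…,x_d^{2^e}, P_d) ) / 2^{d·e} converges to L_S, and L_S > L_R. That is, e_HK(S_{2,d}) > e_HK(R_{2,d}): the Hilbert–Kunz multiplicity distinguishes the A_1 and A_2 singularities in characteristic 2. -/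
open MvPolynomial

/-- The defining equation `Q_d` of the `A₁` singularity in characteristic 2:
`Q_d = x_0x_1 + x_2x_3 + ⋯ + x_{d−1}x_d` for `d` odd and
`Q_d = x_0x_1 + ⋯ + x_{d−2}x_{d−1} + x_d²` for `d` even. -/
noncomputable def A1poly (k : Type*) [Field k] (d : ℕ) : MvPolynomial (Fin (d + 1)) k :=
  (∑ i : Fin ((d + 1) / 2),
      X (⟨2 * i, by omega⟩ : Fin (d + 1)) * X (⟨2 * i + 1, by omega⟩ : Fin (d + 1))) +
    if Even d then X (⟨d, by omega⟩ : Fin (d + 1)) ^ 2 else 0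

/-- The defining equation `P_d` of the `A₂` singularity in characteristic 2:
`P_d = x_0x_1 + ⋯ + x_{d−3}x_{d−2} + x_{d−1}² + x_d³` for `d` odd and
`P_d = x_0x_1 + ⋯ + x_{d−2}x_{d−1} + x_d³` for `d` even. -/
noncomputable def A2poly (k : Type*) [Field k] (d : ℕ) : MvPolynomial (Fin (d + 1)) k :=
  (∑ i : Fin (d / 2),
      X (⟨2 * i, by omega⟩ : Fin (d + 1)) * X (⟨2 * i + 1, by omega⟩ : Fin (d + 1))) +
    (if Odd d then X (⟨d - 1, by omega⟩ : Fin (d + 1)) ^ 2 else 0) +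
    X (⟨d, by omega⟩ : Fin (d + 1)) ^ 3

/-- Combinatorial data splitting the monomials in `σ` into chains under multiplication by `u`. -/
structure ChainData (σ K : Type) where
  u : σ →₀ ℕ
  chain : (σ →₀ ℕ) → K
  idx : (σ →₀ ℕ) → ℕ
  start : K → (σ →₀ ℕ)
  S : Finset K
  c : K → ℕ
  q : σ → ℕ
  hdec : ∀ m, m = start (chain m) + idx m • u
  hch : ∀ m, chain (m + u) = chain m
  hidx : ∀ m, idx (m + u) = idx m + 1
  hcs : ∀ j ∈ S, chain (start j) = j
  his : ∀ j ∈ S, idx (start j) = 0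
  hq : ∀ m, (∃ i, q i ≤ m i) ↔ c (chain m) ≤ idx m
  hS : ∀ j, j ∉ S → c j = 0

namespace ChainData

variable {σ K : Type} (D : ChainData σ K)

lemma chain_add_nsmul (m : σ →₀ ℕ) (n : ℕ) : D.chain (m + n • D.u) = D.chain m := by
  induction n with
  | zero => simp
  | succ n ih => rw [succ_nsmul, ← add_assoc, D.hch, ih]

lemma idx_add_nsmul (m : σ →₀ ℕ) (n : ℕ) : D.idx (m + n • D.u) = D.idx m + n := by
  induction n with
  | zero => simp
  | succ n ih => rw [succ_nsmul, ← add_assoc, D.hidx, ih, add_assoc]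

variable {B : Type*} [CommRing B] (J : Ideal B) (f : B)

/-- the ideal -/
noncomputable def aa : Ideal (MvPolynomial σ B) :=
  (Ideal.span (Set.range fun i : σ => (X i : MvPolynomial σ B) ^ D.q i) ⊔ J.map C) ⊔
    Ideal.span {monomial D.u 1 + C f}

/-- target ideals -/
def tt (j : K) : Ideal B := J ⊔ Ideal.span {f ^ D.c j}

open Classical in
/-- The comparison map. -/
noncomputable def Psi : MvPolynomial σ B →ₗ[B] ((j : D.S) → B ⧸ D.tt J f j) :=
  (basisMonomials σ B).constr B (fun m => fun j =>
    if D.chain m = j then Ideal.Quotient.mk _ (f ^ D.idx m) else 0)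

open Classical in
lemma Psi_monomial (m : σ →₀ ℕ) (b : B) (j : D.S) :
    D.Psi J f (monomial m b) j =
      if D.chain m = j then Ideal.Quotient.mk _ (b * f ^ D.idx m) else 0 := by
  have : (monomial m b : MvPolynomial σ B) = b • (basisMonomials σ B m) := by
    simp [smul_monomial]
  rw [this, map_smul, Psi, Module.Basis.constr_basis]
  simp only [Pi.smul_apply]
  split_ifs
  · rw [map_mul]; rfl
  · simp

lemma fpow_mem (j : K) {n : ℕ} (h : D.c j ≤ n) (b : B) : b * f ^ n ∈ D.tt J f j := by
  apply Ideal.mul_mem_left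
  apply Ideal.mem_sup_right
  rw [Ideal.mem_span_singleton]
  exact pow_dvd_pow f h

lemma Psi_zero_of (m : σ →₀ ℕ) (b : B) (h : ∃ i, D.q i ≤ m i) :
    D.Psi J f (monomial m b) = 0 := by
  classical
  funext j
  rw [Psi_monomial]
  split_ifs with hj
  · rw [D.hq, hj] at h
    exact Ideal.Quotient.eq_zero_iff_mem.2 (D.fpow_mem J f _ h b)
  · rfl

lemma le_ker [CharP B 2] (x : MvPolynomial σ B) (hx : x ∈ D.aa J f) : D.Psi J f x = 0 := by
  classical
  have key : ∀ x ∈ D.aa J f, ∀ r, D.Psi J f (r * x) = 0 := by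
    intro x hx
    have hx' : x ∈ Ideal.span ((Set.range (fun i : σ => (X i : MvPolynomial σ B) ^ D.q i) ∪
        C '' (J : Set B)) ∪ {monomial D.u 1 + C f}) := by
      rw [Ideal.span_union, Ideal.span_union]; exact hx
    refine Submodule.span_induction ?_ ?_ ?_ ?_ hx'
    · rintro y ((⟨i, rfl⟩ | ⟨b, hb, rfl⟩) | hy) r
      · induction r using MvPolynomial.induction_on' with
        | add p q hp hq => rw [add_mul, map_add, hp, hq, add_zero]
        | monomial m a =>
          simp only [X_pow_eq_monomial, monomial_mul]
          apply D.Psi_zero_of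
          exact ⟨i, by simp⟩
      · induction r using MvPolynomial.induction_on' with
        | add p q hp hq => rw [add_mul, map_add, hp, hq, add_zero]
        | monomial m a =>
          rw [mul_comm, C_mul_monomial]
          funext j
          rw [Psi_monomial]
          split_ifs
          · apply Ideal.Quotient.eq_zero_iff_mem.2
            apply Ideal.mem_sup_left
            exact Ideal.mul_mem_right _ _ (Ideal.mul_mem_right _ _ hb)
          · rfl
      · rw [Set.mem_singleton_iff] at hy
        subst hy
        induction r using MvPolynomial.induction_on' with
        | add p q hp hq => rw [add_mul, map_add, hp, hq, add_zero]
        | monomial m a =>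
          rw [mul_add, monomial_mul, mul_comm _ (C f), C_mul_monomial, map_add]
          funext j
          rw [Pi.add_apply, Psi_monomial, Psi_monomial, D.hch, D.hidx]
          split_ifs
          · rw [← map_add]
            have : a * 1 * f ^ (D.idx m + 1) + f * a * f ^ D.idx m
              = 2 * (a * f ^ (D.idx m + 1)) := by ring
            rw [this, show (2 : B) = 0 from by exact_mod_cast CharP.cast_eq_zero B 2, zero_mul,
              map_zero]
            rfl
          · simp
    · intro r; simp
    · intro y z _ _ hy hz r; rw [mul_add, map_add, hy, hz, add_zero]
    · intro a y _ hy r; rw [smul_eq_mul, ← mul_assoc]; exact hy _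
  have := key x hx 1
  rwa [one_mul] at this

lemma mono_mem (m : σ →₀ ℕ) (b : B) (h : ∃ i, D.q i ≤ m i) : monomial m b ∈ D.aa J f := by
  obtain ⟨i, hi⟩ := h
  apply Ideal.mem_sup_left
  apply Ideal.mem_sup_left
  have : (monomial m b : MvPolynomial σ B) =
      monomial (m - Finsupp.single i (D.q i)) b * (X i) ^ D.q i := by
    rw [X_pow_eq_monomial, monomial_mul, mul_one, tsub_add_cancel_of_le]
    simpa using hi
  rw [this]
  exact Ideal.mul_mem_left _ _ (Ideal.subset_span ⟨i, rfl⟩)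

lemma mono_cong [CharP B 2] (m : σ →₀ ℕ) (b : B) (n : ℕ) :
    monomial (m + n • D.u) b - monomial m (b * f ^ n) ∈ D.aa J f := by
  induction n generalizing b with
  | zero => simp
  | succ n ih =>
    have h1 := ih (b * f)
    have h2 : monomial (m + n • D.u) b * (monomial D.u 1 + C f) ∈ D.aa J f :=
      Ideal.mul_mem_left _ _ (Ideal.mem_sup_right (Ideal.subset_span rfl))
    have := add_mem h1 h2
    convert this using 1
    rw [mul_add, monomial_mul, mul_comm _ (C f), C_mul_monomial, succ_nsmul, pow_succ,
      ← add_assoc, mul_one, mul_comm f b]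
    have h3 : b * (f ^ n * f) = b * f * f ^ n := by ring
    rw [h3]
    have h4 : (monomial (m + n • D.u) (b * f) : MvPolynomial σ B)
        + monomial (m + n • D.u) (b * f) = 0 := by
      rw [← map_add, ← two_mul, show (2 : B) = 0 from by exact_mod_cast CharP.cast_eq_zero B 2,
        zero_mul, map_zero]
    linear_combination -h4

lemma exists_rep [CharP B 2] (p : MvPolynomial σ B) :
    ∃ β : D.S → B, p - ∑ j : D.S, monomial (D.start j) (β j) ∈ D.aa J f := by
  classical
  induction p using MvPolynomial.induction_on' with
  | add p q hp hq =>
    obtain ⟨β, hβ⟩ := hp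
    obtain ⟨γ, hγ⟩ := hq
    refine ⟨β + γ, ?_⟩
    convert add_mem hβ hγ using 1
    simp only [Pi.add_apply, map_add, Finset.sum_add_distrib]
    ring
  | monomial m b =>
    by_cases h : D.chain m ∈ D.S
    · refine ⟨Pi.single ⟨_, h⟩ (b * f ^ D.idx m), ?_⟩
      rw [Finset.sum_eq_single ⟨_, h⟩]
      · rw [Pi.single_eq_same]
        have := D.mono_cong J f (D.start (D.chain m)) b (D.idx m)
        rwa [← D.hdec] at this
      · intro j _ hj
        rw [Pi.single_eq_of_ne hj, map_zero]
      · simp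
    · refine ⟨0, ?_⟩
      simp only [Pi.zero_apply, map_zero, Finset.sum_const_zero, sub_zero]
      apply D.mono_mem
      rw [D.hq, D.hS _ h]; exact Nat.zero_le _

lemma start_mem [CharP B 2] (j : K) (hj : j ∈ D.S) (b : B) (hb : b ∈ D.tt J f j) :
    monomial (D.start j) b ∈ D.aa J f := by
  obtain ⟨x, hx, y, hy, rfl⟩ := Submodule.mem_sup.1 hb
  rw [Ideal.mem_span_singleton'] at hy
  obtain ⟨a, rfl⟩ := hy
  rw [map_add]
  apply add_mem
  · apply Ideal.mem_sup_left
    apply Ideal.mem_sup_right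
    rw [← mul_one x, ← C_mul_monomial]
    exact Ideal.mul_mem_right _ _ (Ideal.mem_map_of_mem _ hx)
  · have h1 := D.mono_cong J f (D.start j) a (D.c j)
    have h2 : monomial (D.start j + D.c j • D.u) a ∈ D.aa J f := by
      apply D.mono_mem
      rw [D.hq, D.chain_add_nsmul, D.idx_add_nsmul, D.hcs j hj]; omega
    have := sub_mem h2 h1
    rwa [sub_sub_cancel] at this

lemma Psi_rep (β : D.S → B) (j : D.S) :
    D.Psi J f (∑ j : D.S, monomial (D.start j) (β j)) j = Ideal.Quotient.mk _ (β j) := by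
  classical
  rw [map_sum, Finset.sum_apply, Finset.sum_eq_single j]
  · rw [Psi_monomial, if_pos (D.hcs j j.2), D.his j j.2, pow_zero, mul_one]
  · intro i _ hij
    rw [Psi_monomial, if_neg]
    rw [D.hcs i i.2]
    exact fun h => hij (Subtype.ext h)
  · simp

theorem finrank_eq (k : Type*) [Field k] [Algebra k B] [CharP B 2] [Module.Finite k (B ⧸ J)] :
    Module.finrank k (MvPolynomial σ B ⧸ D.aa J f) =
      ∑ j ∈ D.S, Module.finrank k (B ⧸ (J ⊔ Ideal.span {f ^ D.c j})) := by
  classical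
  let P := (D.Psi J f).restrictScalars k
  have hsurj : Function.Surjective P := by
    intro y
    choose β hβ using fun j => Ideal.Quotient.mk_surjective (y j)
    refine ⟨∑ j : D.S, monomial (D.start j) (β j), funext fun j => ?_⟩
    rw [← hβ j]
    exact D.Psi_rep J f β j
  have hker : LinearMap.ker P = (D.aa J f).restrictScalars k := by
    ext x
    rw [LinearMap.mem_ker, Submodule.restrictScalars_mem]
    constructor
    · intro hx
      obtain ⟨β, hβ⟩ := D.exists_rep J f x
      have h0 := D.le_ker J f _ hβ
      rw [map_sub, show D.Psi J f x = 0 from hx, zero_sub, neg_eq_zero] at h0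
      have h1 : ∑ j : D.S, monomial (D.start j) (β j) ∈ D.aa J f := by
        apply sum_mem
        intro j _
        apply D.start_mem J f _ j.2
        rw [← Ideal.Quotient.eq_zero_iff_mem, ← D.Psi_rep J f β j, h0]; rfl
      have := add_mem hβ h1
      rwa [sub_add_cancel] at this
    · exact fun hx => D.le_ker J f x hx
  have e1 := LinearMap.quotKerEquivOfSurjective P hsurj
  have e2 := (Submodule.quotEquivOfEq _ _ hker).symm.trans e1
  have e3 := (Submodule.Quotient.restrictScalarsEquiv k (D.aa J f)).symm.trans e2
  rw [e3.finrank_eq]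
  have : ∀ j : D.S, Module.Finite k (B ⧸ D.tt J f j) := fun j =>
    Module.Finite.of_surjective
      (Ideal.Quotient.factorₐ k (show J ≤ D.tt J f j from le_sup_left)).toLinearMap
      (Ideal.Quotient.factor_surjective (show J ≤ D.tt J f j from le_sup_left))
  rw [Module.finrank_pi_fintype]
  rw [← Finset.sum_coe_sort D.S]
  rfl

end ChainData

/-- The ideal of pure powers. -/
noncomputable def mI (k : Type*) [Field k] {ι : Type*} (c : ι → ℕ) : Ideal (MvPolynomial ι k) :=
  Ideal.span (Set.range fun i : ι => (X i : MvPolynomial ι k) ^ c i)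

/-- colength -/
noncomputable def GG (k : Type*) [Field k] {ι : Type*} (c : ι → ℕ) (f : MvPolynomial ι k) : ℕ :=
  Module.finrank k (MvPolynomial ι k ⧸ (mI k c ⊔ Ideal.span {f}))

section
variable {k : Type*} [Field k]

lemma map_mI {ι κ : Type*} (e : ι ≃ κ) (c : ι → ℕ) (c' : κ → ℕ) (h : ∀ i, c' (e i) = c i) :
    Ideal.map (rename e : MvPolynomial ι k →ₐ[k] MvPolynomial κ k) (mI k c) = mI k c' := by
  rw [mI, mI, Ideal.map_span, ← Set.range_comp]
  congr 1
  ext x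
  constructor
  · rintro ⟨i, rfl⟩
    exact ⟨e i, by simp [h]⟩
  · rintro ⟨i, rfl⟩
    refine ⟨e.symm i, ?_⟩
    have := h (e.symm i)
    rw [Equiv.apply_symm_apply] at this
    simp [this]

lemma GG_congr {ι κ : Type*} (e : ι ≃ κ) (c : ι → ℕ) (c' : κ → ℕ) (f : MvPolynomial ι k)
    (f' : MvPolynomial κ k) (h : ∀ i, c' (e i) = c i) (hf : rename e f = f') :
    GG k c f = GG k c' f' := by
  have hI : (mI k c' ⊔ Ideal.span {f'}) =
      Ideal.map ((renameEquiv k e : MvPolynomial ι k ≃ₐ[k] MvPolynomial κ k) :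
        MvPolynomial ι k →ₐ[k] MvPolynomial κ k) (mI k c ⊔ Ideal.span {f}) := by
    have h0 : ((renameEquiv k e : MvPolynomial ι k ≃ₐ[k] MvPolynomial κ k) :
        MvPolynomial ι k →ₐ[k] MvPolynomial κ k) = rename e := by
      ext i; simp
    rw [h0, Ideal.map_sup, map_mI e c c' h, Ideal.map_span, Set.image_singleton]
    rw [← hf]
  exact (Ideal.quotientEquivAlg _ _ (renameEquiv k e) hI).toLinearEquiv.finrank_eq

lemma mem_mI {ι : Type*} (c : ι → ℕ) (x : MvPolynomial ι k) :
    x ∈ mI k c ↔ ∀ m ∈ x.support, ∃ i, c i ≤ m i := by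
  have : mI k c = Ideal.span ((fun s => (monomial s (1 : k))) ''
      (Set.range fun i => Finsupp.single i (c i))) := by
    rw [mI, ← Set.range_comp]
    congr 2
    funext i
    simp [X_pow_eq_monomial]
  rw [this, mem_ideal_span_monomial_image]
  simp

open Classical in
/-- coefficients below `c` -/
noncomputable def coefMap {ι : Type*} [Fintype ι] (c : ι → ℕ) :
    MvPolynomial ι k →ₗ[k] (((i : ι) → Fin (c i)) → k) :=
  LinearMap.pi fun m => lcoeff k (Finsupp.equivFunOnFinite.symm fun i => (m i : ℕ))

lemma coefMap_ker {ι : Type*} [Fintype ι] (c : ι → ℕ) :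
    LinearMap.ker (coefMap (k := k) c) = (mI k c).restrictScalars k := by
  ext x
  rw [LinearMap.mem_ker, Submodule.restrictScalars_mem, mem_mI]
  constructor
  · intro h m hm
    by_contra! hc
    have := congrFun h fun i => ⟨m i, hc i⟩
    rw [mem_support_iff] at hm
    apply hm
    refine Eq.trans ?_ this
    simp only [coefMap, LinearMap.pi_apply, lcoeff_apply]
    congr 1
    ext i
    simp
  · intro h
    funext m
    by_contra hc
    obtain ⟨i, hi⟩ := h _ (mem_support_iff.2 hc)
    simp at hi
    have := (m i).2
    omega

lemma coefMap_surj {ι : Type*} [Fintype ι] (c : ι → ℕ) :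
    Function.Surjective (coefMap (k := k) c) := by
  classical
  intro y
  refine ⟨∑ m, monomial (Finsupp.equivFunOnFinite.symm fun i => (m i : ℕ)) (y m), ?_⟩
  funext n
  simp only [coefMap, LinearMap.pi_apply, lcoeff_apply, coeff_sum, coeff_monomial]
  rw [Finset.sum_eq_single n]
  · simp
  · intro m _ hm
    rw [if_neg]
    intro h
    apply hm
    funext i
    have := DFunLike.congr_fun h i
    simpa [Fin.ext_iff] using this
  · simp

noncomputable def mIEquiv {ι : Type*} [Fintype ι] (c : ι → ℕ) :
    (MvPolynomial ι k ⧸ mI k c) ≃ₗ[k] (((i : ι) → Fin (c i)) → k) :=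
  (Submodule.Quotient.restrictScalarsEquiv k (mI k c)).symm.trans
    ((Submodule.quotEquivOfEq _ _ (coefMap_ker c)).symm.trans
      (LinearMap.quotKerEquivOfSurjective _ (coefMap_surj c)))

instance mI_finite {ι : Type*} [Finite ι] (c : ι → ℕ) :
    Module.Finite k (MvPolynomial ι k ⧸ mI k c) := by
  classical
  cases nonempty_fintype ι
  exact Module.Finite.equiv (mIEquiv c).symm

lemma finrank_mI {ι : Type*} [Fintype ι] (c : ι → ℕ) :
    Module.finrank k (MvPolynomial ι k ⧸ mI k c) = ∏ i, c i := by
  classical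
  rw [(mIEquiv c).finrank_eq]
  simp

lemma GG_chain [CharP k 2] {σ K : Type} (D : ChainData σ K) {ι : Type*} [Finite ι] (c : ι → ℕ)
    (f : MvPolynomial ι k) (U : MvPolynomial (σ ⊕ ι) k)
    (hU : sumAlgEquiv k σ ι U = monomial D.u 1 + C f) :
    GG k (Sum.elim D.q c) U = ∑ j ∈ D.S, GG k c (f ^ D.c j) := by
  have hI : D.aa (mI k c) f =
      Ideal.map ((sumAlgEquiv k σ ι : _ ≃ₐ[k] _) :
        MvPolynomial (σ ⊕ ι) k →ₐ[k] MvPolynomial σ (MvPolynomial ι k))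
        (mI k (Sum.elim D.q c) ⊔ Ideal.span {U}) := by
    rw [Ideal.map_sup, Ideal.map_span, Set.image_singleton]
    have h1 : ((sumAlgEquiv k σ ι : _ ≃ₐ[k] _) :
        MvPolynomial (σ ⊕ ι) k →ₐ[k] MvPolynomial σ (MvPolynomial ι k)) U
         = monomial D.u 1 + C f := hU
    rw [h1, ChainData.aa]
    congr 1
    rw [mI, mI, Ideal.map_span, Ideal.map_span, ← Ideal.span_union, ← Set.range_comp,
      ← Set.range_comp, ← Set.Sum.elim_range]
    congr 2
    funext i
    rcases i with i | i
    · simp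
    · simp
  have := D.finrank_eq (mI k c) f k
  rw [GG]
  rw [(Ideal.quotientEquivAlg _ _ (sumAlgEquiv k σ ι) hI).toLinearEquiv.finrank_eq, this]
  rfl

end

/-- chains of `x ^ r` in `k[x]/(x^q)` -/
noncomputable def powChain (r q : ℕ) (hr : 0 < r) : ChainData Unit ℕ where
  u := Finsupp.single () r
  chain m := m () % r
  idx m := m () / r
  start j := Finsupp.single () j
  S := Finset.range r
  c j := if j < r then (q - j + (r - 1)) / r else 0
  q _ := q
  hdec m := by
    ext ⟨⟩
    simp [Nat.mod_add_div']
  hch m := by simp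
  hidx m := by simp [Nat.add_div_right _ hr]
  hcs j hj := by
    simp only [Finset.mem_range] at hj
    simp [Nat.mod_eq_of_lt hj]
  his j hj := by
    simp only [Finset.mem_range] at hj
    simp [hj]
  hq m := by
    rw [if_pos (Nat.mod_lt _ hr)]
    have h := Nat.mod_add_div (m ()) r
    have h2 := Nat.mod_lt (m ()) hr
    rw [← Nat.lt_succ_iff, Nat.div_lt_iff_lt_mul hr, Nat.succ_mul, mul_comm]
    constructor
    · rintro ⟨i, hi⟩
      have hi2 : q ≤ m () := hi
      omega
    · intro hi
      exact ⟨(), by omega⟩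
  hS j hj := by
    simp only [Finset.mem_range] at hj
    simp [hj]

/-- chains of `x y` in `k[x,y]/(x^q,y^q)` -/
noncomputable def pairChain (q : ℕ) : ChainData Bool ℤ where
  u := Finsupp.single false 1 + Finsupp.single true 1
  chain m := (m false : ℤ) - m true
  idx m := min (m false) (m true)
  start j := Finsupp.single false j.toNat + Finsupp.single true (-j).toNat
  S := Finset.Ico (-(q : ℤ)) q
  c j := q - j.natAbs
  q _ := q
  hdec m := by
    ext b
    cases b <;> simp <;> omega
  hch m := by simp
  hidx m := by simp
  hcs j hj := by simp
  his j hj := by simp; omega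
  hq m := by
    simp only [Bool.exists_bool]
    omega
  hS j hj := by
    simp only [Finset.mem_Ico] at hj
    omega

lemma pair_sum (q : ℕ) (g : ℕ → ℕ) :
    ∑ j ∈ Finset.Ico (-(q : ℤ)) q, g (q - j.natAbs) =
      ∑ c ∈ Finset.range q, (g c + g (c + 1)) := by
  have h1 : ∑ c ∈ Finset.range q, g c = ∑ j ∈ Finset.Ico (-(q : ℤ)) 0, g (q - j.natAbs) := by
    refine Finset.sum_bij' (fun c _ => (c : ℤ) - q) (fun j _ => (j + q).toNat) ?_ ?_ ?_ ?_ ?_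
    all_goals intro a ha
    all_goals simp only [Finset.mem_range, Finset.mem_Ico] at *
    all_goals try omega
    congr 1; omega
  have h2 : ∑ c ∈ Finset.range q, g (c + 1) =
      ∑ j ∈ Finset.Ico (0 : ℤ) q, g (q - j.natAbs) := by
    refine Finset.sum_bij' (fun c _ => (q : ℤ) - 1 - c) (fun j _ => (q - 1 - j).toNat) ?_ ?_ ?_ ?_ ?_
    all_goals intro a ha
    all_goals simp only [Finset.mem_range, Finset.mem_Ico] at *
    all_goals try omega
    congr 1; omega
  rw [Finset.sum_add_distrib, h1, h2, ← Finset.sum_union]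
  · congr 1
    ext j
    simp only [Finset.mem_union, Finset.mem_Ico]
    omega
  · rw [Finset.disjoint_left]
    intro j
    simp only [Finset.mem_Ico]
    omega

section
variable {k : Type*} [Field k] [CharP k 2]


lemma sumAlg_inr {σ ι : Type*} (f : MvPolynomial ι k) :
    sumAlgEquiv k σ ι (rename Sum.inr f) = C f := by
  have := DFunLike.congr_fun (sumAlgEquiv_comp_rename_inr (R := k) (S₁ := σ) (S₂ := ι)) f
  exact this

lemma GG_pow {ι : Type*} [Finite ι] (c : ι → ℕ) (f : MvPolynomial ι k) (q r : ℕ) (hr : 0 < r) :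
    GG k (Sum.elim (fun _ : Unit => q) c) (X (Sum.inl ()) ^ r + rename Sum.inr f) =
      ∑ j ∈ Finset.range r, GG k c (f ^ ((q - j + (r - 1)) / r)) := by
  have := GG_chain (powChain r q hr) c f (X (Sum.inl ()) ^ r + rename Sum.inr f) (by
    rw [map_add, sumAlg_inr, map_pow, sumAlgEquiv_X_inl, X_pow_eq_monomial]; rfl)
  refine this.trans (Finset.sum_congr rfl fun j hj => ?_)
  simp only [powChain, Finset.mem_range] at hj ⊢
  rw [if_pos hj]

lemma GG_one {ι : Type*} [Finite ι] (c : ι → ℕ) (f : MvPolynomial ι k) (n : ℕ) :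
    GG k c (f ^ n) =
    GG k (Sum.elim (fun _ : Unit => n) c) (X (Sum.inl ()) + rename Sum.inr f) := by
  have := GG_pow c f n 1 one_pos
  simpa using this.symm

lemma GG_pair {ι : Type*} [Finite ι] (c : ι → ℕ) (f : MvPolynomial ι k) (q : ℕ) :
    GG k (Sum.elim (fun _ : Bool => q) c)
      (X (Sum.inl false) * X (Sum.inl true) + rename Sum.inr f) =
      ∑ i ∈ Finset.range q, (GG k c (f ^ i) + GG k c (f ^ (i + 1))) := by
  have := GG_chain (pairChain q) c f
    (X (Sum.inl false) * X (Sum.inl true) + rename Sum.inr f) (by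
    rw [map_add, sumAlg_inr, map_mul, sumAlgEquiv_X_inl, sumAlgEquiv_X_inl, X, X,
      monomial_mul, one_mul]; rfl)
  rw [← pair_sum q (fun n => GG k c (f ^ n))]
  exact this

end

lemma exists_equiv_of_map {ι κ : Type*} [Fintype ι] [Fintype κ] (c : ι → ℕ) (c' : κ → ℕ)
    (h : Finset.univ.val.map c = Finset.univ.val.map c') :
    ∃ e : ι ≃ κ, ∀ i, c' (e i) = c i := by
  classical
  have h1 : ∀ a, Nonempty ({i // c i = a} ≃ {j // c' j = a}) := by
    intro a
    refine ⟨Fintype.equivOfCardEq ?_⟩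
    have := congrArg (Multiset.count a) h
    rw [Multiset.count_map, Multiset.count_map] at this
    rw [Fintype.card_subtype, Fintype.card_subtype]
    simpa [Finset.card, Finset.filter, eq_comm] using this
  have e := fun a => Classical.choice (h1 a)
  exact ⟨Equiv.ofFiberEquiv e, fun i => Equiv.ofFiberEquiv_map e i⟩

/-- colength of the linear form `∑ x_i` modulo powers -/
noncomputable def NN (k : Type*) [Field k] (s : Multiset ℕ) : ℕ :=
  GG k (fun i : s.ToType => i.1) (∑ i, X i)

section
variable {k : Type*} [Field k]

lemma NN_eq {ι : Type*} [Fintype ι] (c : ι → ℕ) (s : Multiset ℕ)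
    (hs : Finset.univ.val.map c = s) : GG k c (∑ i, X i) = NN k s := by
  obtain ⟨e, he⟩ := exists_equiv_of_map c (fun i : s.ToType => i.1) (by
    rw [hs]; exact (Multiset.map_univ_coe s).symm)
  refine GG_congr e _ _ _ _ he ?_
  simp only [map_sum, rename_X]
  exact Equiv.sum_comp e (fun j => (X j : MvPolynomial _ k))

lemma NN_pow [CharP k 2] {ι : Type*} [Fintype ι] (c : ι → ℕ) (s : Multiset ℕ)
    (hs : Finset.univ.val.map c = s) (n : ℕ) : GG k c ((∑ i, X i) ^ n) = NN k (n ::ₘ s) := by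
  rw [GG_one, ← NN_eq (Sum.elim (fun _ : Unit => n) c)]
  · congr 1
    simp [map_sum]
  · rw [← hs]
    rw [← Finset.univ_disjSum_univ, Finset.val_disjSum, Multiset.disjSum, Multiset.map_add,
      Multiset.map_map, Multiset.map_map]
    simp [Function.comp_def]

lemma NN_Z [CharP k 2] (s : Multiset ℕ) (e n : ℕ) (hs : ∀ a ∈ s, a ≤ 2 ^ e) (hn : 2 ^ e ≤ n) :
    NN k (n ::ₘ s) = s.prod := by
  rw [← NN_pow (fun i : s.ToType => i.1) s (Multiset.map_univ_coe s)]
  have : (∑ i : s.ToType, (X i : MvPolynomial _ k)) ^ n ∈ mI k (fun i : s.ToType => i.1) := by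
    rw [← Nat.sub_add_cancel hn, pow_add]
    apply Ideal.mul_mem_left
    rw [sum_pow_char_pow 2]
    refine Ideal.sum_mem _ fun i _ => ?_
    rw [← Nat.sub_add_cancel (hs i.1 (Multiset.coe_mem)), pow_add]
    apply Ideal.mul_mem_left
    exact Ideal.subset_span ⟨i, rfl⟩
  rw [GG, sup_eq_left.2 ((Ideal.span_singleton_le_iff_mem _).2 this), finrank_mI]
  exact congrArg Multiset.prod (Multiset.map_univ_coe s)
end

section
variable {k E : Type*} [Field k] [CommRing E] [Algebra k E] [Module.Finite k E]

lemma fr_quot (I : Ideal E) : Module.finrank k (E ⧸ I) + Module.finrank k (I.restrictScalars k)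
    = Module.finrank k E := by
  rw [← Submodule.finrank_quotient_add_finrank (I.restrictScalars k)]
  congr 1

/-- the trace form -/
noncomputable def trForm (l : E →ₗ[k] k) : LinearMap.BilinForm k E := (LinearMap.mul k E).compr₂ l

lemma trForm_apply (l : E →ₗ[k] k) (x y : E) : trForm l x y = l (x * y) := rfl

lemma fr_orth (l : E →ₗ[k] k) (hl : ∀ x, (∀ y, l (x * y) = 0) → x = 0) (I : Ideal E) :
    Module.finrank k ((trForm l).orthogonal (I.restrictScalars k)) =
      Module.finrank k (E ⧸ I) := by
  have hs : (trForm l).IsSymm := ⟨fun x y => by simp [trForm_apply, mul_comm]⟩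
  have hn : (trForm l).Nondegenerate := by
    refine ⟨fun x hx => hl x hx, fun x hx => hl x fun y => ?_⟩
    rw [mul_comm]; exact hx y
  have := LinearMap.BilinForm.finrank_orthogonal hn (I.restrictScalars k)
  have h2 := fr_quot (k := k) I
  omega

lemma frob_reflect (l : E →ₗ[k] k) (hl : ∀ x, (∀ y, l (x * y) = 0) → x = 0)
    (s t : E) (Q v : ℕ) (hsQ : s ^ Q = 0) (htQ : t ^ Q = 0)
    (hs : ∀ a ≤ Q, Module.finrank k (E ⧸ Ideal.span {s ^ a}) = a * v)
    (ht : ∀ a ≤ Q, Module.finrank k (E ⧸ Ideal.span {t ^ a}) = a * v)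
    (a b : ℕ) (ha : a ≤ Q) (hb : b ≤ Q) :
    (Module.finrank k (E ⧸ Ideal.span {s ^ a} ⊔ Ideal.span {t ^ b}) : ℤ) =
      v * (a + b - Q) +
      Module.finrank k (E ⧸ Ideal.span {s ^ (Q - a)} ⊔ Ideal.span {t ^ (Q - b)}) := by
  have hE : Module.finrank k E = Q * v := by
    have h1 := fr_quot (k := k) (Ideal.span {s ^ Q} : Ideal E)
    rw [hs Q le_rfl, hsQ] at h1
    rw [← h1]
    simp
  have key : ∀ (s : E), s ^ Q = 0 →
      (∀ a ≤ Q, Module.finrank k (E ⧸ Ideal.span {s ^ a}) = a * v) → ∀ a ≤ Q,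
      (trForm l).orthogonal ((Ideal.span {s ^ (Q - a)} : Ideal E).restrictScalars k) =
        (Ideal.span {s ^ a} : Ideal E).restrictScalars k := by
    intro s hsQ hs a ha
    symm
    apply Submodule.eq_of_le_of_finrank_eq
    · intro x hx y hy
      simp only [Submodule.restrictScalars_mem] at hx hy
      obtain ⟨x, rfl⟩ := Ideal.mem_span_singleton.1 hx
      obtain ⟨y, rfl⟩ := Ideal.mem_span_singleton.1 hy
      have h0 : s ^ (Q - a) * y * (s ^ a * x) = s ^ (Q - a + a) * (x * y) := by ring
      change l (s ^ (Q - a) * y * (s ^ a * x)) = 0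
      rw [h0, Nat.sub_add_cancel ha, hsQ]
      simp
    · rw [fr_orth l hl, hs _ (Nat.sub_le _ _)]
      have h1 := fr_quot (k := k) (Ideal.span {s ^ a} : Ideal E)
      rw [hs a ha, hE] at h1
      rw [Nat.sub_mul]; omega
  have h3 := fr_orth l hl (Ideal.span {s ^ (Q - a)} ⊔ Ideal.span {t ^ (Q - b)})
  have h4 : (trForm l).orthogonal
      ((Ideal.span {s ^ (Q - a)} ⊔ Ideal.span {t ^ (Q - b)} : Ideal E).restrictScalars k) =
      (Ideal.span {s ^ a} : Ideal E).restrictScalars k ⊓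
      (Ideal.span {t ^ b} : Ideal E).restrictScalars k := by
    rw [← key s hsQ hs a ha, ← key t htQ ht b hb, Submodule.restrictScalars_sup]
    apply le_antisymm
    · exact le_inf (LinearMap.BilinForm.orthogonal_le le_sup_left)
        (LinearMap.BilinForm.orthogonal_le le_sup_right)
    · rintro x ⟨hx1, hx2⟩ y hy
      obtain ⟨y1, h1, y2, h2, rfl⟩ := Submodule.mem_sup.1 hy
      have e1 := hx1 y1 h1
      have e2 := hx2 y2 h2
      rw [map_add, LinearMap.add_apply, e1, e2, add_zero]
  rw [h4] at h3
  have h5 := Submodule.finrank_sup_add_finrank_inf_eq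
    ((Ideal.span {s ^ a} : Ideal E).restrictScalars k)
    ((Ideal.span {t ^ b} : Ideal E).restrictScalars k)
  rw [h3, ← Submodule.restrictScalars_sup] at h5
  have h6 := fr_quot (k := k) (Ideal.span {s ^ a} ⊔ Ideal.span {t ^ b} : Ideal E)
  have h7 := fr_quot (k := k) (Ideal.span {s ^ a} : Ideal E)
  have h8 := fr_quot (k := k) (Ideal.span {t ^ b} : Ideal E)
  rw [hs a ha] at h7
  rw [ht b hb] at h8
  rw [hE] at h6 h7 h8
  zify at *
  linarith
end

section
variable {k : Type*} [Field k]

lemma exists_frob {ι : Type*} [Fintype ι] (c : ι → ℕ) :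
    ∃ l : (MvPolynomial ι k ⧸ mI k c) →ₗ[k] k, ∀ x, (∀ y, l (x * y) = 0) → x = 0 := by
  by_cases hc : ∀ i, 0 < c i
  · let top : ι →₀ ℕ := Finsupp.equivFunOnFinite.symm fun i => c i - 1
    have hle : (mI k c).restrictScalars k ≤ LinearMap.ker (lcoeff k top) := by
      intro x hx
      rw [Submodule.restrictScalars_mem, mem_mI] at hx
      rw [LinearMap.mem_ker, lcoeff_apply]
      by_contra h
      obtain ⟨i, hi⟩ := hx top (mem_support_iff.2 h)
      have := hc i
      simp [top] at hi
      omega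
    refine ⟨((mI k c).restrictScalars k).liftQ (lcoeff k top) hle ∘ₗ
      (Submodule.Quotient.restrictScalarsEquiv k (mI k c)).symm.toLinearMap, ?_⟩
    intro x hx
    obtain ⟨p, rfl⟩ := Ideal.Quotient.mk_surjective x
    rw [Ideal.Quotient.eq_zero_iff_mem]
    by_contra hp
    rw [mem_mI] at hp
    push Not at hp
    obtain ⟨m, hm, hlt⟩ := hp
    have h1 := hx (Ideal.Quotient.mk _ (monomial (top - m) 1))
    have h2 : coeff top (p * monomial (top - m) 1) = 0 := h1
    have h3 : top = m + (top - m) := by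
      ext i
      have := hlt i
      simp [top]
      omega
    have h4 : coeff (m + (top - m)) (p * monomial (top - m) 1) = 0 := by rw [← h3]; exact h2
    rw [coeff_mul_monomial, mul_one] at h4
    rw [mem_support_iff] at hm
    exact hm h4
  · push Not at hc
    obtain ⟨i, hi⟩ := hc
    refine ⟨0, fun x _ => ?_⟩
    obtain ⟨p, rfl⟩ := Ideal.Quotient.mk_surjective x
    rw [Ideal.Quotient.eq_zero_iff_mem, mem_mI]
    exact fun m _ => ⟨i, by omega⟩

lemma finrank_dq {A : Type*} [CommRing A] [Algebra k A] (I J : Ideal A) (J' : Ideal (A ⧸ I))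
    (h : J' = J.map (Ideal.Quotient.mkₐ k I)) :
    Module.finrank k ((A ⧸ I) ⧸ J') = Module.finrank k (A ⧸ I ⊔ J) := by
  subst h
  exact (DoubleQuot.quotQuotEquivQuotSupₐ k I J).toLinearEquiv.finrank_eq

lemma map_elim_univ {ι : Type*} [Fintype ι] (c : ι → ℕ) (n : ℕ) :
    (Finset.univ.val.map (Sum.elim (fun _ : Unit => n) c)) = n ::ₘ Finset.univ.val.map c := by
  rw [← Finset.univ_disjSum_univ, Finset.val_disjSum, Multiset.disjSum, Multiset.map_add,
      Multiset.map_map, Multiset.map_map]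
  simp [Function.comp_def]

lemma mI_shrink {ι : Type*} (c : ι → ℕ) (a Q : ℕ) (ha : a ≤ Q) :
    mI k (Sum.elim (fun _ : Unit => Q) c) ⊔ Ideal.span {X (Sum.inl ()) ^ a} =
      mI k (Sum.elim (fun _ : Unit => a) c) := by
  apply le_antisymm
  · refine sup_le (Ideal.span_le.2 ?_) (Ideal.span_le.2 ?_)
    · rintro _ ⟨i | i, rfl⟩
      · have : (X (Sum.inl ()) : MvPolynomial (Unit ⊕ ι) k) ^ a ∈
            mI k (Sum.elim (fun _ : Unit => a) c) := Ideal.subset_span ⟨Sum.inl (), rfl⟩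
        change (X (Sum.inl ()) : MvPolynomial (Unit ⊕ ι) k) ^ Q ∈ _
        rw [← Nat.sub_add_cancel ha, pow_add]
        exact Ideal.mul_mem_left _ _ this
      · exact Ideal.subset_span ⟨Sum.inr i, rfl⟩
    · rintro _ rfl
      exact Ideal.subset_span ⟨Sum.inl (), rfl⟩
  · refine Ideal.span_le.2 ?_
    rintro _ ⟨i | i, rfl⟩
    · exact Ideal.mem_sup_right (Ideal.subset_span rfl)
    · exact Ideal.mem_sup_left (Ideal.subset_span ⟨Sum.inr i, rfl⟩)

lemma NN_R [CharP k 2] (s : Multiset ℕ) (e a b : ℕ) (hs : ∀ x ∈ s, x ≤ 2 ^ e) (ha : a ≤ 2 ^ e)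
    (hb : b ≤ 2 ^ e) :
    (NN k (b ::ₘ a ::ₘ s) : ℤ) = s.prod * (a + b - (2 ^ e : ℕ)) +
      NN k ((2 ^ e - b) ::ₘ (2 ^ e - a) ::ₘ s) := by
  set Q := 2 ^ e with hQ
  let c0 : s.ToType → ℕ := fun i => i.1
  let c : Unit ⊕ s.ToType → ℕ := Sum.elim (fun _ : Unit => Q) c0
  have hm : ∀ n, (Finset.univ.val.map (Sum.elim (fun _ : Unit => n) c0)) = n ::ₘ s := by
    intro n
    rw [map_elim_univ]
    congr 1
    exact Multiset.map_univ_coe s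
  let σ : MvPolynomial (Unit ⊕ s.ToType) k := ∑ i, X i
  obtain ⟨l, hl⟩ := exists_frob (k := k) c
  have hσ : σ ^ Q ∈ mI k c := by
    simp only [σ, hQ]
    rw [sum_pow_char_pow 2]
    refine Ideal.sum_mem _ fun i _ => ?_
    have : c i ≤ 2 ^ e := by
      rcases i with i | i
      · exact le_rfl
      · exact hs i.1 (Multiset.coe_mem)
    rw [← Nat.sub_add_cancel this, pow_add]
    apply Ideal.mul_mem_left
    exact Ideal.subset_span ⟨i, rfl⟩
  have hprod : ∀ n, ∏ i, (Sum.elim (fun _ : Unit => n) c0) i = n * s.prod := by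
    intro n
    have := congrArg Multiset.prod (hm n)
    rw [Multiset.prod_cons] at this
    exact this
  have hfin : ∀ a b, a ≤ Q → b ≤ Q → Module.finrank k ((MvPolynomial (Unit ⊕ s.ToType) k ⧸ mI k c) ⧸
      Ideal.span {(Ideal.Quotient.mk (mI k c) (X (Sum.inl ()))) ^ a} ⊔
      Ideal.span {(Ideal.Quotient.mk (mI k c) σ) ^ b}) = NN k (b ::ₘ a ::ₘ s) := by
    intro a b ha hb
    rw [finrank_dq (k := k) (mI k c) (Ideal.span {X (Sum.inl ()) ^ a} ⊔ Ideal.span {σ ^ b})]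
    · rw [← sup_assoc, mI_shrink _ _ _ ha]
      exact NN_pow _ _ (hm a) b
    · rw [Ideal.map_sup, Ideal.map_span, Ideal.map_span]
      simp
  rw [← hfin a b ha hb, ← hfin (Q - a) (Q - b) (Nat.sub_le _ _) (Nat.sub_le _ _)]
  refine frob_reflect l hl _ _ Q s.prod ?_ ?_ ?_ ?_ a b ha hb
  · rw [← map_pow, Ideal.Quotient.eq_zero_iff_mem]
    exact Ideal.subset_span ⟨Sum.inl (), rfl⟩
  · rw [← map_pow, Ideal.Quotient.eq_zero_iff_mem]
    exact hσ
  · intro a ha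
    rw [finrank_dq (k := k) (mI k c) (Ideal.span {X (Sum.inl ()) ^ a})]
    · rw [mI_shrink _ _ _ ha, finrank_mI, hprod]
    · rw [Ideal.map_span]
      simp
  · intro b hb
    rw [finrank_dq (k := k) (mI k c) (Ideal.span {σ ^ b})]
    · refine (NN_pow _ _ (hm Q) b).trans ?_
      rw [Multiset.cons_swap, NN_Z _ e Q ?_ le_rfl, Multiset.prod_cons]
      intro x hx
      rcases Multiset.mem_cons.1 hx with rfl | hx
      · exact hb
      · exact hs x hx
    · rw [Ideal.map_span]
      simp
end

/-- iterated pair sums -/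
noncomputable def FF (N : Multiset ℕ → ℝ) (q : ℕ) : ℕ → Multiset ℕ → ℝ
  | 0, t => N t
  | m + 1, t => ∑ c ∈ Finset.range q, (FF N q m (c ::ₘ t) + FF N q m ((c + 1) ::ₘ t))

lemma FF_succ (N : Multiset ℕ → ℝ) (q m : ℕ) (t : Multiset ℕ) :
    FF N q (m + 1) t =
      ∑ c ∈ Finset.range q, (FF N q m (c ::ₘ t) + FF N q m ((c + 1) ::ₘ t)) := rfl

/-- product -/
noncomputable def Pd (s : Multiset ℕ) : ℝ := (s.prod : ℕ)

lemma Pd_cons (a : ℕ) (s : Multiset ℕ) : Pd (a ::ₘ s) = a * Pd s := by simp [Pd]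

lemma FF_sub (N M : Multiset ℕ → ℝ) (r : ℝ) (q m : ℕ) (t : Multiset ℕ) :
    FF (fun s => N s - r * M s) q m t = FF N q m t - r * FF M q m t := by
  induction m generalizing t with
  | zero => rfl
  | succ m ih =>
    simp only [FF_succ, ih, Finset.mul_sum, ← Finset.sum_sub_distrib]
    exact Finset.sum_congr rfl fun _ _ => by ring

lemma sum_odd_sq (q : ℕ) (A : ℝ) :
    ∑ c ∈ Finset.range q, ((c : ℝ) * A + ((c + 1 : ℕ) : ℝ) * A) = (q : ℝ) ^ 2 * A := by
  induction q with
  | zero => simp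
  | succ q ih => rw [Finset.sum_range_succ, ih]; push_cast; ring

lemma FF_prod (q m : ℕ) (t : Multiset ℕ) : FF Pd q m t = (q : ℝ) ^ (2 * m) * Pd t := by
  induction m generalizing t with
  | zero => simp [FF]
  | succ m ih =>
    simp only [FF_succ, ih, Pd_cons]
    rw [show (q : ℝ) ^ (2 * (m + 1)) * Pd t = q ^ 2 * (q ^ (2 * m) * Pd t) by ring,
      ← sum_odd_sq]
    exact Finset.sum_congr rfl fun _ _ => by ring

lemma FF_swap2 (N : Multiset ℕ → ℝ) (Q : ℕ)
    (h : ∀ a b t, a ≤ Q → b ≤ Q → (∀ x ∈ t, x ≤ Q) →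
      N (b ::ₘ a ::ₘ t) = N ((Q - b) ::ₘ (Q - a) ::ₘ t)) (m : ℕ) :
    ∀ a b t, a ≤ Q → b ≤ Q → (∀ x ∈ t, x ≤ Q) →
      FF N Q m (b ::ₘ a ::ₘ t) = FF N Q m ((Q - b) ::ₘ (Q - a) ::ₘ t) := by
  induction m with
  | zero => exact h
  | succ m ih =>
    intro a b t ha hb ht
    rw [FF_succ, FF_succ]
    refine Finset.sum_congr rfl fun c hc => ?_
    rw [Finset.mem_range] at hc
    have key : ∀ c ≤ Q, FF N Q m (c ::ₘ b ::ₘ a ::ₘ t) =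
        FF N Q m (c ::ₘ (Q - b) ::ₘ (Q - a) ::ₘ t) := by
      intro c hc
      rw [Multiset.cons_swap c b, Multiset.cons_swap c a, Multiset.cons_swap c (Q - b),
        Multiset.cons_swap c (Q - a)]
      apply ih a b _ ha hb
      intro x hx
      rcases Multiset.mem_cons.1 hx with rfl | hx
      · exact hc
      · exact ht x hx
    rw [key c hc.le, key (c + 1) hc]

lemma sum_refl (Q : ℕ) (g : ℕ → ℝ) :
    ∑ c ∈ Finset.range Q, (g (Q - c) + g (Q - (c + 1))) =
      ∑ c ∈ Finset.range Q, (g c + g (c + 1)) := by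
  rw [← Finset.sum_range_reflect]
  refine Finset.sum_congr rfl fun c hc => ?_
  rw [Finset.mem_range] at hc
  rw [show Q - (Q - 1 - c) = c + 1 by omega, show Q - (Q - 1 - c + 1) = c by omega, add_comm]

lemma FF_sym1 (N : Multiset ℕ → ℝ) (Q : ℕ)
    (h : ∀ a b t, a ≤ Q → b ≤ Q → (∀ x ∈ t, x ≤ Q) →
      N (b ::ₘ a ::ₘ t) = N ((Q - b) ::ₘ (Q - a) ::ₘ t)) (m a : ℕ) (t : Multiset ℕ)
    (ha : a ≤ Q) (ht : ∀ x ∈ t, x ≤ Q) :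
    FF N Q (m + 1) (a ::ₘ t) = FF N Q (m + 1) ((Q - a) ::ₘ t) := by
  rw [FF_succ, FF_succ, ← sum_refl Q (fun c => FF N Q m (c ::ₘ (Q - a) ::ₘ t))]
  refine Finset.sum_congr rfl fun c hc => ?_
  rw [Finset.mem_range] at hc
  rw [FF_swap2 N Q h m a c t ha hc.le ht, FF_swap2 N Q h m a (c + 1) t ha hc ht]

lemma sum_half (q : ℕ) (g : ℕ → ℝ) :
    ∑ c ∈ Finset.range (2 * q), (g c + g (c + 1)) =
      ∑ u ∈ Finset.range q, ((g u + g (2 * q - u)) + (g (u + 1) + g (2 * q - (u + 1)))) := by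
  have h : ∑ u ∈ Finset.range q, (g (2 * q - u) + g (2 * q - (u + 1))) =
      ∑ c ∈ Finset.range q, (g (q + c) + g (q + c + 1)) := by
    rw [← Finset.sum_range_reflect]
    refine Finset.sum_congr rfl fun c hc => ?_
    rw [Finset.mem_range] at hc
    rw [show 2 * q - (q - 1 - c) = q + c + 1 by omega,
      show 2 * q - (q - 1 - c + 1) = q + c by omega, add_comm]
  rw [two_mul, Finset.sum_range_add, ← two_mul, ← h, ← Finset.sum_add_distrib]
  exact Finset.sum_congr rfl fun _ _ => by ring

/-- abstract properties of the function `N` -/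
structure NProp (N : Multiset ℕ → ℝ) : Prop where
  hZ : ∀ e s n, (∀ a ∈ s, a ≤ 2 ^ e) → 2 ^ e ≤ n → N (n ::ₘ s) = Pd s
  hR : ∀ e s a b, (∀ x ∈ s, x ≤ 2 ^ e) → a ≤ 2 ^ e → b ≤ 2 ^ e →
    N (b ::ₘ a ::ₘ s) = Pd s * (a + b - 2 ^ e) + N ((2 ^ e - b) ::ₘ (2 ^ e - a) ::ₘ s)

/-- corrected version -/
noncomputable def N0 (N : Multiset ℕ → ℝ) (Q : ℕ) : Multiset ℕ → ℝ :=
  fun s => N s - (1 / Q : ℝ) * Pd s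

section
variable {N : Multiset ℕ → ℝ}

lemma N0_inv (hN : NProp N) (e : ℕ) : ∀ a b t, a ≤ 2 ^ e → b ≤ 2 ^ e → (∀ x ∈ t, x ≤ 2 ^ e) →
      N0 N (2 ^ e) (b ::ₘ a ::ₘ t) = N0 N (2 ^ e) ((2 ^ e - b) ::ₘ (2 ^ e - a) ::ₘ t) := by
  intro a b t ha hb ht
  simp only [N0]
  rw [hN.hR e t a b ht ha hb]
  simp only [Pd_cons]
  push_cast [Nat.cast_sub ha, Nat.cast_sub hb]
  field_simp
  ring

lemma FF_N0 (q m : ℕ) (hq : 0 < q) (t : Multiset ℕ) :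
    FF (N0 N q) q (m + 1) t = FF N q (m + 1) t - (q : ℝ) ^ (2 * m + 1) * Pd t := by
  have hq' : (q : ℝ) ≠ 0 := by positivity
  unfold N0
  rw [FF_sub, FF_prod]
  field_simp
  ring

lemma FF_fold (hN : NProp N) (e m : ℕ) (t : Multiset ℕ) (ht : ∀ x ∈ t, x ≤ 2 ^ e) :
    FF (N0 N (2 ^ (e + 1))) (2 ^ (e + 1)) (m + 1) t = 2 ^ m * FF N (2 ^ e) (m + 1) t := by
  have hQ : 2 ^ (e + 1) = 2 * 2 ^ e := by ring
  induction m generalizing t with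
  | zero =>
    rw [FF_succ, FF_succ, pow_zero, one_mul]
    have := sum_half (2 ^ e) (fun c => FF (N0 N (2 ^ (e + 1))) (2 ^ (e + 1)) 0 (c ::ₘ t))
    rw [← hQ] at this
    rw [this]
    have key : ∀ u ≤ 2 ^ e, FF (N0 N (2 ^ (e + 1))) (2 ^ (e + 1)) 0 (u ::ₘ t) +
        FF (N0 N (2 ^ (e + 1))) (2 ^ (e + 1)) 0 ((2 ^ (e + 1) - u) ::ₘ t) =
        FF N (2 ^ e) 0 (u ::ₘ t) := by
      intro u hu
      simp only [FF, N0, Pd_cons]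
      rw [hN.hZ e t (2 ^ (e + 1) - u) ht (by omega)]
      have : u ≤ 2 ^ (e + 1) := by omega
      push_cast [Nat.cast_sub this]
      field_simp
      ring
    refine Finset.sum_congr rfl fun u hu => ?_
    rw [Finset.mem_range] at hu
    rw [← key u hu.le, ← key (u + 1) hu]
  | succ m ih =>
    rw [FF_succ _ _ (m + 1), FF_succ _ _ (m + 1)]
    have := sum_half (2 ^ e) (fun c => FF (N0 N (2 ^ (e + 1))) (2 ^ (e + 1)) (m + 1) (c ::ₘ t))
    rw [← hQ] at this
    rw [this, Finset.mul_sum]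
    have key : ∀ u ≤ 2 ^ e, FF (N0 N (2 ^ (e + 1))) (2 ^ (e + 1)) (m + 1) (u ::ₘ t) +
        FF (N0 N (2 ^ (e + 1))) (2 ^ (e + 1)) (m + 1) ((2 ^ (e + 1) - u) ::ₘ t) =
        2 ^ (m + 1) * FF N (2 ^ e) (m + 1) (u ::ₘ t) := by
      intro u hu
      rw [← FF_sym1 _ _ (N0_inv hN (e + 1)) m u t (by omega)
        (fun x hx => (ht x hx).trans (by omega)), ih]
      · ring
      · intro x hx
        rcases Multiset.mem_cons.1 hx with rfl | hx
        · exact hu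
        · exact ht x hx
    refine Finset.sum_congr rfl fun u hu => ?_
    rw [Finset.mem_range] at hu
    rw [mul_add, ← key u hu.le, ← key (u + 1) hu]

lemma FF_double (hN : NProp N) (e m : ℕ) (t : Multiset ℕ) (ht : ∀ x ∈ t, x ≤ 2 ^ e) :
    FF N (2 ^ (e + 1)) (m + 1) t =
      ((2 : ℝ) ^ (e + 1)) ^ (2 * m + 1) * Pd t + 2 ^ m * FF N (2 ^ e) (m + 1) t := by
  rw [← FF_fold hN e m t ht, FF_N0 _ _ (by positivity)]
  push_cast
  ring

lemma FF_const (hN : NProp N) (e m : ℕ) (t : Multiset ℕ) (ht : ∀ x ∈ t, x ≤ 2 ^ e) :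
    FF N (2 ^ e) m (2 ^ e ::ₘ t) = ((2 : ℝ) ^ e) ^ (2 * m) * Pd t := by
  induction m generalizing t with
  | zero => simp [FF, hN.hZ e t _ ht le_rfl]
  | succ m ih =>
    rw [FF_succ]
    have key : ∀ u ≤ 2 ^ e, FF N (2 ^ e) m (u ::ₘ 2 ^ e ::ₘ t) =
        (u : ℝ) * (((2 : ℝ) ^ e) ^ (2 * m) * Pd t) := by
      intro u hu
      rw [Multiset.cons_swap, ih, Pd_cons]
      · ring
      · intro x hx
        rcases Multiset.mem_cons.1 hx with rfl | hx
        · exact hu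
        · exact ht x hx
    have h2 := sum_odd_sq (2 ^ e) (((2 : ℝ) ^ e) ^ (2 * m) * Pd t)
    rw [show ((2 : ℝ) ^ e) ^ (2 * (m + 1)) * Pd t = ((2 ^ e : ℕ) : ℝ) ^ 2 *
      (((2 : ℝ) ^ e) ^ (2 * m) * Pd t) by push_cast; ring, ← h2]
    refine Finset.sum_congr rfl fun u hu => ?_
    rw [Finset.mem_range] at hu
    rw [key u hu.le, key (u + 1) hu]

lemma FF_refl (hN : NProp N) (e m a : ℕ) (t : Multiset ℕ) (ht : ∀ x ∈ t, x ≤ 2 ^ e) (ha : a ≤ 2 ^ e) :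
    FF N (2 ^ e) (m + 1) (a ::ₘ t) = FF N (2 ^ e) (m + 1) ((2 ^ e - a) ::ₘ t)
      + ((2 : ℝ) ^ e) ^ (2 * m + 1) * Pd t * (2 * a - 2 ^ e) := by
  have h := FF_sym1 _ _ (N0_inv hN e) m a t ha ht
  rw [FF_N0 _ _ (by positivity), FF_N0 _ _ (by positivity), Pd_cons, Pd_cons] at h
  push_cast [Nat.cast_sub ha] at h
  linear_combination h
end

lemma NProp_NN (k : Type*) [Field k] [CharP k 2] : NProp (fun s => (NN k s : ℝ)) where
  hZ e s n hs hn := by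
    simp only [NN_Z s e n hs hn, Pd]
  hR e s a b hs ha hb := by
    have := NN_R (k := k) s e a b hs ha hb
    have h2 := congrArg (Int.cast : ℤ → ℝ) this
    rw [Int.cast_add, Int.cast_mul, Int.cast_sub, Int.cast_add] at h2
    simp only [Int.cast_natCast] at h2
    rw [Nat.cast_pow, Nat.cast_ofNat] at h2
    exact h2

/-- sum of `m` hyperbolic pairs plus `f` -/
noncomputable def PP (k : Type*) [Field k] (m : ℕ) {ι : Type} (f : MvPolynomial ι k) :
    MvPolynomial ((Fin m × Bool) ⊕ ι) k :=
  ∑ i : Fin m, X (Sum.inl (i, false)) * X (Sum.inl (i, true)) + rename Sum.inr f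

/-- exponents -/
def PC (q m : ℕ) {ι : Type} (c : ι → ℕ) : (Fin m × Bool) ⊕ ι → ℕ := Sum.elim (fun _ => q) c

/-- swap a unit past the pairs -/
def swapU (m : ℕ) (ι : Type) : Unit ⊕ ((Fin m × Bool) ⊕ ι) ≃ (Fin m × Bool) ⊕ (Unit ⊕ ι) :=
  (Equiv.sumAssoc _ _ _).symm.trans
    ((Equiv.sumCongr (Equiv.sumComm _ _) (Equiv.refl _)).trans (Equiv.sumAssoc _ _ _))

/-- peel a pair -/
def peel (m : ℕ) (ι : Type) : (Fin (m + 1) × Bool) ⊕ ι ≃ Bool ⊕ ((Fin m × Bool) ⊕ ι) where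
  toFun := Sum.elim (fun p => Fin.cases (motive := fun _ => Bool ⊕ ((Fin m × Bool) ⊕ ι))
    (Sum.inl p.2) (fun i => Sum.inr (Sum.inl (i, p.2))) p.1) (fun i => Sum.inr (Sum.inr i))
  invFun := Sum.elim (fun b => Sum.inl (0, b))
    (Sum.elim (fun p => Sum.inl (p.1.succ, p.2)) Sum.inr)
  left_inv := by
    rintro (⟨i, b⟩ | i)
    · refine Fin.cases ?_ (fun j => ?_) i <;> simp
    · simp
  right_inv := by
    rintro (b | ⟨i, b⟩ | i) <;> simp

section
variable {k : Type*} [Field k] [CharP k 2]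

lemma PP_sum_swap (m q n : ℕ) {ι : Type} [Fintype ι] (c : ι → ℕ) (f : MvPolynomial ι k) :
    GG k (PC q m c) (PP k m f ^ n) =
      GG k (PC q m (Sum.elim (fun _ : Unit => n) c)) (PP k m (X (Sum.inl ()) + rename Sum.inr f)) := by
  rw [GG_one]
  refine GG_congr (swapU m ι) _ _ _ _ ?_ ?_
  · rintro (i | i | i) <;> rfl
  · simp only [PP, map_add, map_sum, map_mul, rename_X, rename_rename]
    have h1 : (swapU m ι ∘ Sum.inr ∘ Sum.inr) = Sum.inr ∘ Sum.inr := rfl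
    have h2 : swapU m ι (Sum.inl ()) = Sum.inr (Sum.inl ()) := rfl
    have h3 : ∀ p, swapU m ι (Sum.inr (Sum.inl p)) = Sum.inl p := fun p => rfl
    simp only [Function.comp_assoc, h1, h2, h3]
    ring

lemma PP_eq (m q : ℕ) : ∀ {ι : Type} [Fintype ι] (c : ι → ℕ) (s : Multiset ℕ)
    (_ : Finset.univ.val.map c = s),
    (GG k (PC q m c) (PP k m (∑ i, X i)) : ℝ) = FF (fun s => (NN k s : ℝ)) q m s := by
  induction m with
  | zero =>
    intro ι _ c s hs
    rw [FF, ← NN_eq c s hs]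
    congr 1
    refine (GG_congr ((Equiv.emptySum (Fin 0 × Bool) ι).symm) _ _ _ _ ?_ ?_).symm
    · intro i; rfl
    · simp [PP, map_sum]
  | succ m ih =>
    intro ι _ c s hs
    have h1 : GG k (PC q (m + 1) c) (PP k (m + 1) (∑ i, X i)) =
        GG k (Sum.elim (fun _ : Bool => q) (PC q m c))
          (X (Sum.inl false) * X (Sum.inl true) + rename Sum.inr (PP k m (∑ i, X i))) := by
      refine GG_congr (peel m ι) _ _ _ _ ?_ ?_
      · rintro (⟨i, b⟩ | i)
        · refine Fin.cases ?_ (fun j => ?_) i <;> rfl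
        · rfl
      · simp only [PP, map_add, map_sum, map_mul, rename_X, Fin.sum_univ_succ]
        have h2 : ∀ i b, peel m ι (Sum.inl (Fin.succ i, b)) = Sum.inr (Sum.inl (i, b)) :=
          fun _ _ => rfl
        have h3 : ∀ b, peel m ι (Sum.inl (0, b)) = Sum.inl b := fun _ => rfl
        have h4 : ∀ i, peel m ι (Sum.inr i) = Sum.inr (Sum.inr i) := fun _ => rfl
        simp only [h2, h3, h4]
        ring
    have h5 : ∀ n, (GG k (PC q m c) (PP k m (∑ i, X i) ^ n) : ℝ) =
        FF (fun s => (NN k s : ℝ)) q m (n ::ₘ s) := by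
      intro n
      rw [PP_sum_swap, ← ih (Sum.elim (fun _ : Unit => n) c) (n ::ₘ s) (by
        rw [map_elim_univ, hs])]
      congr 2
      simp [map_sum]
    rw [h1, GG_pair, FF_succ]
    push_cast
    simp only [h5]

lemma PP_pow (m q n : ℕ) {ι : Type} [Fintype ι] (c : ι → ℕ) (s : Multiset ℕ)
    (hs : Finset.univ.val.map c = s) :
    (GG k (PC q m c) (PP k m (∑ i, X i) ^ n) : ℝ) =
      FF (fun s => (NN k s : ℝ)) q m (n ::ₘ s) := by
  rw [PP_sum_swap, ← PP_eq m q (Sum.elim (fun _ : Unit => n) c) (n ::ₘ s) (by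
        rw [map_elim_univ, hs])]
  congr 2
  simp [map_sum]
end

/-- the embedding of the pairs in `Fin` -/
def pr (d m : ℕ) (h : 2 * m ≤ d + 1) (p : Fin m × Bool) : Fin (d + 1) :=
  ⟨2 * p.1 + (if p.2 then 1 else 0), by have := p.1.2; split <;> omega⟩

lemma pr_false (d m : ℕ) (h : 2 * m ≤ d + 1) (i : Fin m) :
    pr d m h (i, false) = ⟨2 * i, by omega⟩ := rfl

lemma pr_true (d m : ℕ) (h : 2 * m ≤ d + 1) (i : Fin m) :
    pr d m h (i, true) = ⟨2 * i + 1, by omega⟩ := rfl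

lemma pr_inj (d m : ℕ) (h : 2 * m ≤ d + 1) : Function.Injective (pr d m h) := by
  rintro ⟨i, b⟩ ⟨j, b'⟩ hh
  simp only [pr, Fin.mk.injEq] at hh
  cases b <;> cases b' <;> simp at hh ⊢ <;> omega

/-- all pairs -/
noncomputable def e0 (d m : ℕ) (h : 2 * m = d + 1) : (Fin m × Bool) ⊕ Empty ≃ Fin (d + 1) :=
  Equiv.ofBijective (Sum.elim (pr d m h.le) (fun i => i.elim)) (by
    rw [Fintype.bijective_iff_injective_and_card]
    refine ⟨?_, by simp; omega⟩
    rintro (p | p) (p' | p') hh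
    · exact congrArg _ (pr_inj _ _ (by omega) hh)
    · exact p'.elim
    · exact p.elim
    · exact p.elim)

/-- pairs and a last variable -/
noncomputable def e1 (d m : ℕ) (h : 2 * m = d) :
    Unit ⊕ ((Fin m × Bool) ⊕ Empty) ≃ Fin (d + 1) :=
  Equiv.ofBijective (Sum.elim (fun _ => ⟨d, by omega⟩)
    (Sum.elim (pr d m (by omega)) (fun i => i.elim))) (by
    rw [Fintype.bijective_iff_injective_and_card]
    refine ⟨?_, by simp; omega⟩
    rintro (p | p | p) (p' | p' | p') hh
    · rfl
    · have h1 := p'.1.2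
      simp [pr] at hh
      split at hh <;> omega
    · exact p'.elim
    · have h1 := p.1.2
      simp [pr] at hh
      split at hh <;> omega
    · exact congrArg (Sum.inr ∘ Sum.inl) (pr_inj _ _ (by omega) hh)
    · exact p'.elim
    · exact p.elim
    · exact p.elim
    · exact p.elim)

/-- pairs and two last variables -/
noncomputable def e2 (d m : ℕ) (h : 2 * m + 1 = d) :
    Unit ⊕ (Unit ⊕ ((Fin m × Bool) ⊕ Empty)) ≃ Fin (d + 1) :=
  Equiv.ofBijective (Sum.elim (fun _ => ⟨d - 1, by omega⟩) (Sum.elim (fun _ => ⟨d, by omega⟩)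
    (Sum.elim (pr d m (by omega)) (fun i => i.elim)))) (by
    rw [Fintype.bijective_iff_injective_and_card]
    refine ⟨?_, by simp; omega⟩
    rintro (p | p | p | p) (p' | p' | p' | p') hh
    · rfl
    · simp at hh
      omega
    · have h1 := p'.1.2
      simp [pr] at hh
      split at hh <;> omega
    · exact p'.elim
    · simp at hh
      omega
    · rfl
    · have h1 := p'.1.2
      simp [pr] at hh
      split at hh <;> omega
    · exact p'.elim
    · have h1 := p.1.2
      simp [pr] at hh
      split at hh <;> omega
    · have h1 := p.1.2
      simp [pr] at hh
      split at hh <;> omega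
    · exact congrArg (Sum.inr ∘ Sum.inr ∘ Sum.inl) (pr_inj _ _ (by omega) hh)
    · exact p'.elim
    · exact p.elim
    · exact p.elim
    · exact p.elim
    · exact p.elim)

/-- real valued function of the multiset -/
noncomputable def NR (k : Type*) [Field k] (s : Multiset ℕ) : ℝ := (NN k s : ℝ)

section
variable {k : Type*} [Field k] [CharP k 2]

lemma HK_GG (n e : ℕ) (f : MvPolynomial (Fin n) k) :
    HKfun k n 2 e f = GG k (fun _ => 2 ^ e) f := by
  rw [HKfun, GG, mI, Ideal.span_union]

/-- exponents on no extra variables -/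
abbrev c00 : Empty → ℕ := fun i => i.elim

/-- pairs only -/
noncomputable abbrev P0 (k : Type*) [Field k] (m : ℕ) : MvPolynomial ((Fin m × Bool) ⊕ Empty) k :=
  PP k m (∑ i : Empty, X i)

lemma HK_A1_odd (d m e : ℕ) (hm : 2 * m = d + 1) :
    (HKfun k (d + 1) 2 e (A1poly k d) : ℝ) = FF (NR k) (2 ^ e) m 0 := by
  obtain rfl : m = (d + 1) / 2 := by omega
  have hd : ¬ Even d := by rw [Nat.not_even_iff]; omega
  refine Eq.trans ?_ (PP_eq _ (2 ^ e) c00 0 rfl)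
  rw [HK_GG]
  congr 1
  refine (GG_congr (e0 d _ hm) _ _ _ _ ?_ ?_).symm
  · rintro (i | i)
    · rfl
    · exact i.elim
  · rw [A1poly, if_neg hd]
    simp only [PP, map_add, map_sum, map_mul, rename_X]
    simp [e0, pr_false, pr_true]

lemma HK_A1_even (d m e : ℕ) (hm : 2 * m = d) :
    (HKfun k (d + 1) 2 e (A1poly k d) : ℝ) =
      ∑ j ∈ Finset.range 2, FF (NR k) (2 ^ e) m {(2 ^ e - j + 1) / 2} := by
  obtain rfl : m = (d + 1) / 2 := by omega
  have hd : Even d := by rw [Nat.even_iff]; omega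
  have h1 : HKfun k (d + 1) 2 e (A1poly k d) =
      GG k (Sum.elim (fun _ : Unit => 2 ^ e) (PC (2 ^ e) ((d + 1) / 2) c00))
        (X (Sum.inl ()) ^ 2 + rename Sum.inr (P0 k ((d + 1) / 2))) := by
    rw [HK_GG]
    refine (GG_congr (e1 d _ hm) _ _ _ _ ?_ ?_).symm
    · rintro (i | i | i)
      · rfl
      · rfl
      · exact i.elim
    · rw [A1poly, if_pos hd]
      simp only [PP, map_add, map_sum, map_mul, rename_X, map_pow]
      simp [e1, pr_false, pr_true, add_comm]
  rw [h1, GG_pow _ _ _ _ (by norm_num)]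
  push_cast
  refine Finset.sum_congr rfl fun j _ => ?_
  exact PP_pow _ _ _ c00 0 rfl

lemma HK_A2_even (d m e : ℕ) (hm : 2 * m = d) :
    (HKfun k (d + 1) 2 e (A2poly k d) : ℝ) =
      ∑ j ∈ Finset.range 3, FF (NR k) (2 ^ e) m {(2 ^ e - j + 2) / 3} := by
  obtain rfl : m = d / 2 := by omega
  have hd : ¬ Odd d := by rw [Nat.not_odd_iff]; omega
  have h1 : HKfun k (d + 1) 2 e (A2poly k d) =
      GG k (Sum.elim (fun _ : Unit => 2 ^ e) (PC (2 ^ e) (d / 2) c00))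
        (X (Sum.inl ()) ^ 3 + rename Sum.inr (P0 k (d / 2))) := by
    rw [HK_GG]
    refine (GG_congr (e1 d _ hm) _ _ _ _ ?_ ?_).symm
    · rintro (i | i | i)
      · rfl
      · rfl
      · exact i.elim
    · rw [A2poly, if_neg hd]
      simp only [PP, map_add, map_sum, map_mul, rename_X, map_pow]
      simp [e1, pr_false, pr_true, add_comm]
  rw [h1, GG_pow _ _ _ _ (by norm_num)]
  push_cast
  refine Finset.sum_congr rfl fun j _ => ?_
  exact PP_pow _ _ _ c00 0 rfl

/-- swap two units -/
def swapUU (ι : Type) : Unit ⊕ (Unit ⊕ ι) ≃ Unit ⊕ (Unit ⊕ ι) :=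
  (Equiv.sumAssoc _ _ _).symm.trans
    ((Equiv.sumCongr (Equiv.sumComm _ _) (Equiv.refl _)).trans (Equiv.sumAssoc _ _ _))

lemma GG_cube_pow {ι : Type} [Fintype ι] (c : ι → ℕ) (f : MvPolynomial ι k) (q w : ℕ) :
    GG k (Sum.elim (fun _ : Unit => q) c) ((X (Sum.inl ()) ^ 3 + rename Sum.inr f) ^ w) =
      ∑ j ∈ Finset.range 3, GG k (Sum.elim (fun _ : Unit => w) c)
        ((X (Sum.inl ()) + rename Sum.inr f) ^ ((q - j + 2) / 3)) := by
  rw [← GG_pow _ _ q 3 (by norm_num), GG_one]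
  refine GG_congr (swapUU ι) _ _ _ _ ?_ ?_
  · rintro (i | i | i) <;> rfl
  · simp only [map_add, map_pow, rename_X, rename_rename]
    have h1 : (swapUU ι ∘ Sum.inr ∘ Sum.inr) = Sum.inr ∘ Sum.inr := rfl
    have h2 : swapUU ι (Sum.inl ()) = Sum.inr (Sum.inl ()) := rfl
    have h3 : swapUU ι (Sum.inr (Sum.inl ())) = Sum.inl () := rfl
    simp only [h1, h2, h3]
    ring

lemma HK_A2_odd (d m e : ℕ) (hm : 2 * m + 1 = d) :
    (HKfun k (d + 1) 2 e (A2poly k d) : ℝ) =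
      ∑ i ∈ Finset.range 2, ∑ j ∈ Finset.range 3,
        FF (NR k) (2 ^ e) m {(2 ^ e - j + 2) / 3, (2 ^ e - i + 1) / 2} := by
  obtain rfl : m = d / 2 := by omega
  have hd : Odd d := by rw [Nat.odd_iff]; omega
  have h1 : HKfun k (d + 1) 2 e (A2poly k d) =
      GG k (Sum.elim (fun _ : Unit => 2 ^ e) (Sum.elim (fun _ : Unit => 2 ^ e)
        (PC (2 ^ e) (d / 2) c00)))
        (X (Sum.inl ()) ^ 2 + rename Sum.inr (X (Sum.inl ()) ^ 3 + rename Sum.inr (P0 k (d / 2)))) := by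
    rw [HK_GG]
    refine (GG_congr (e2 d _ hm) _ _ _ _ ?_ ?_).symm
    · rintro (i | i | i | i)
      · rfl
      · rfl
      · rfl
      · exact i.elim
    · rw [A2poly, if_pos hd]
      simp only [PP, map_add, map_sum, map_mul, rename_X, map_pow]
      simp [e2, pr_false, pr_true]
      ring
  rw [h1, GG_pow _ _ _ _ (by norm_num)]
  push_cast
  refine Finset.sum_congr rfl fun i _ => ?_
  rw [GG_cube_pow]
  push_cast
  refine Finset.sum_congr rfl fun j _ => ?_
  have h2 := PP_pow (k := k) (d / 2) (2 ^ e) ((2 ^ e - j + 2) / 3)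
    (Sum.elim (fun _ : Unit => (2 ^ e - i + (2 - 1)) / 2) c00) _ (map_elim_univ _ _)
  refine Eq.trans ?_ h2
  congr 1
  refine GG_congr (swapU _ _) _ _ _ _ ?_ ?_
  · rintro (i | i | i) <;> rfl
  · rw [map_pow]
    congr 1
    simp only [PP, map_add, map_sum, map_mul, rename_X]
    have h2 : swapU (d / 2) Empty (Sum.inl ()) = Sum.inr (Sum.inl ()) := rfl
    have h3 : ∀ p, swapU (d / 2) Empty (Sum.inr (Sum.inl p)) = Sum.inl p := fun p => rfl
    simp [h2, h3, add_comm]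
end

lemma third_sum (q : ℕ) (hq : 0 < q) :
    (q * 2 - 0 + 2) / 3 + (q * 2 - 1 + 2) / 3 + (q * 2 - 2 + 2) / 3 = 2 * q := by
  have h := Nat.mod_add_div q 3
  generalize q / 3 = a at *
  have h3 : q % 3 = 0 ∨ q % 3 = 1 ∨ q % 3 = 2 := by omega
  rcases h3 with h3 | h3 | h3 <;> rw [h3] at h <;> subst h
  · rw [show (0 + 3 * a) * 2 - 0 + 2 = 2 + 3 * (2 * a) by omega,
      show (0 + 3 * a) * 2 - 1 + 2 = 1 + 3 * (2 * a) by omega,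
      show (0 + 3 * a) * 2 - 2 + 2 = 0 + 3 * (2 * a) by omega]
    omega
  · rw [show (1 + 3 * a) * 2 - 0 + 2 = 1 + 3 * (2 * a + 1) by omega,
      show (1 + 3 * a) * 2 - 1 + 2 = 0 + 3 * (2 * a + 1) by omega,
      show (1 + 3 * a) * 2 - 2 + 2 = 2 + 3 * (2 * a) by omega]
    omega
  · rw [show (2 + 3 * a) * 2 - 0 + 2 = 0 + 3 * (2 * a + 2) by omega,
      show (2 + 3 * a) * 2 - 1 + 2 = 2 + 3 * (2 * a + 1) by omega,
      show (2 + 3 * a) * 2 - 2 + 2 = 1 + 3 * (2 * a + 1) by omega]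
    omega

lemma tendsto_rec (u : ℕ → ℝ) (A B : ℝ) (hB0 : 0 ≤ B) (hB : B < 1)
    (hu : ∀ e, u (e + 1) = A + B * u e) :
    Filter.Tendsto u Filter.atTop (nhds (A / (1 - B))) := by
  have h1 : 1 - B ≠ 0 := by linarith
  have h : ∀ e, u e = A / (1 - B) + B ^ e * (u 0 - A / (1 - B)) := by
    intro e
    induction e with
    | zero => simp
    | succ e ih =>
      rw [hu, ih]
      field_simp
      ring
  have h2 := ((tendsto_pow_atTop_nhds_zero_of_lt_one hB0 hB).mul_const
    (u 0 - A / (1 - B))).const_add (A / (1 - B))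
  rw [zero_mul, add_zero] at h2
  exact h2.congr fun e => (h e).symm

section
variable {k : Type*} [Field k] [CharP k 2]

lemma hNR : NProp (NR k) := NProp_NN k

lemma Pd_zero : Pd 0 = 1 := by simp [Pd]
lemma Pd_single (a : ℕ) : Pd {a} = a := by simp [Pd]

lemma lim_A1_odd (M d : ℕ) (hd : d = 2 * M + 1) :
    Filter.Tendsto (fun e : ℕ => (HKfun k (d + 1) 2 e (A1poly k d) : ℝ) / 2 ^ (d * e))
      Filter.atTop (nhds (1 / (1 - 1 / 2 ^ (M + 1)))) := by
  subst hd
  apply tendsto_rec _ _ _ (by positivity)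
  · rw [div_lt_one (by positivity)]
    exact one_lt_pow₀ (by norm_num) (by omega)
  · intro e
    rw [HK_A1_odd _ (M + 1) _ (by ring), HK_A1_odd _ (M + 1) _ (by ring),
      FF_double hNR e M 0 (by simp), Pd_zero]
    generalize FF (NR k) (2 ^ e) (M + 1) 0 = y
    rw [show (2 * M + 1) * (e + 1) = (2 * M + 1) * e + M + (M + 1) by ring]
    simp only [pow_add, ← pow_mul]
    field_simp
    ring

lemma lim_A1_even (M d : ℕ) (hd : d = 2 * (M + 1)) :
    Filter.Tendsto (fun e : ℕ => (HKfun k (d + 1) 2 e (A1poly k d) : ℝ) / 2 ^ (d * e))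
      Filter.atTop (nhds (1 + 1 / 2 ^ (M + 1))) := by
  subst hd
  rw [← Filter.tendsto_add_atTop_iff_nat 1]
  refine tendsto_const_nhds.congr fun e => ?_
  rw [HK_A1_even _ (M + 1) _ (by ring)]
  have h1 : ∀ j ∈ Finset.range 2, FF (NR k) (2 ^ (e + 1)) (M + 1) {(2 ^ (e + 1) - j + 1) / 2} =
      FF (NR k) (2 ^ (e + 1)) (M + 1) {2 ^ e} := by
    intro j hj
    rw [Finset.mem_range] at hj
    rw [show (2 ^ (e + 1) - j + 1) / 2 = 2 ^ e by
      have : 0 < 2 ^ e := by positivity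
      rw [pow_succ]; omega]
  rw [Finset.sum_congr rfl h1, FF_double hNR e M {2 ^ e} (by simp), Pd_single,
    show ({2 ^ e} : Multiset ℕ) = 2 ^ e ::ₘ 0 from rfl,
    FF_const hNR e (M + 1) 0 (by simp), Pd_zero]
  simp only [Finset.sum_const, Finset.card_range, nsmul_eq_mul]
  push_cast
  rw [show 2 * (M + 1) * (e + 1) = 2 * (M + 1) * e + (M + 1) + (M + 1) by ring]
  simp only [pow_add, ← pow_mul]
  field_simp
  ring

lemma lim_A2_even (M d : ℕ) (hd : d = 2 * (M + 1)) :
    Filter.Tendsto (fun e : ℕ => (HKfun k (d + 1) 2 e (A2poly k d) : ℝ) / 2 ^ (d * e))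
      Filter.atTop (nhds ((1 + 1 / 2 ^ (M + 2)) / (1 - 1 / 2 ^ (M + 2)))) := by
  subst hd
  apply tendsto_rec _ _ _ (by positivity)
  · rw [div_lt_one (by positivity)]
    exact one_lt_pow₀ (by norm_num) (by omega)
  · intro e
    rw [HK_A2_even _ (M + 1) _ (by ring), HK_A2_even _ (M + 1) _ (by ring)]
    have hq : 0 < 2 ^ e := by positivity
    have hstep : ∀ w w', w + w' = 2 ^ e → FF (NR k) (2 ^ (e + 1)) (M + 1) {w} =
        ((2 : ℝ) ^ (e + 1)) ^ (2 * M + 1) * w + 2 ^ M * (FF (NR k) (2 ^ e) (M + 1) {w'} +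
          ((2 : ℝ) ^ e) ^ (2 * M + 1) * (2 * w - 2 ^ e)) := by
      intro w w' h
      have h2 := FF_refl (hNR (k := k)) e M w 0 (by simp) (by omega)
      rw [Pd_zero, mul_one, show 2 ^ e - w = w' by omega] at h2
      rw [FF_double hNR e M {w} (by simp; omega), Pd_single]
      congr 2
    simp only [Finset.sum_range_succ, Finset.sum_range_zero, zero_add]
    rw [hstep ((2 ^ (e + 1) - 0 + 2) / 3) ((2 ^ e - 2 + 2) / 3) (by rw [pow_succ]; omega),
      hstep ((2 ^ (e + 1) - 1 + 2) / 3) ((2 ^ e - 1 + 2) / 3) (by rw [pow_succ]; omega),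
      hstep ((2 ^ (e + 1) - 2 + 2) / 3) ((2 ^ e - 0 + 2) / 3) (by rw [pow_succ]; omega)]
    have hsum : (2 ^ (e + 1) - 0 + 2) / 3 + (2 ^ (e + 1) - 1 + 2) / 3
      + (2 ^ (e + 1) - 2 + 2) / 3 = 2 * 2 ^ e := by
      rw [pow_succ]; exact third_sum _ hq
    generalize (2 ^ (e + 1) - 0 + 2) / 3 = w0 at *
    generalize (2 ^ (e + 1) - 1 + 2) / 3 = w1 at *
    generalize (2 ^ (e + 1) - 2 + 2) / 3 = w2 at *
    generalize FF (NR k) (2 ^ e) (M + 1) {(2 ^ e - 0 + 2) / 3} = y0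
    generalize FF (NR k) (2 ^ e) (M + 1) {(2 ^ e - 1 + 2) / 3} = y1
    generalize FF (NR k) (2 ^ e) (M + 1) {(2 ^ e - 2 + 2) / 3} = y2
    have hs : (w0 : ℝ) = 2 * 2 ^ e - w1 - w2 := by
      have : ((w0 + w1 + w2 : ℕ) : ℝ) = ((2 * 2 ^ e : ℕ) : ℝ) := by rw [hsum]
      push_cast at this
      linarith
    rw [hs]
    rw [show 2 * (M + 1) * (e + 1) = 2 * (M + 1) * e + M + (M + 2) by ring]
    simp only [pow_add, ← pow_mul]
    field_simp
    ring

lemma lim_A2_odd (M d : ℕ) (hd : d = 2 * (M + 1) + 1) :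
    Filter.Tendsto (fun e : ℕ => (HKfun k (d + 1) 2 e (A2poly k d) : ℝ) / 2 ^ (d * e))
      Filter.atTop (nhds (1 + 1 / 2 ^ (M + 1))) := by
  subst hd
  rw [← Filter.tendsto_add_atTop_iff_nat 1]
  refine tendsto_const_nhds.congr fun e => ?_
  rw [HK_A2_odd _ (M + 1) _ (by ring)]
  have hq : 0 < 2 ^ e := by positivity
  have hstep : ∀ w, w ≤ 2 ^ e → FF (NR k) (2 ^ (e + 1)) (M + 1) {w, 2 ^ e} =
      (w : ℝ) * (((2 : ℝ) ^ (e + 1)) ^ (2 * M + 1) * 2 ^ e +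
        2 ^ M * ((2 : ℝ) ^ e) ^ (2 * (M + 1))) := by
    intro w hw
    rw [show ({w, 2 ^ e} : Multiset ℕ) = 2 ^ e ::ₘ {w} from Multiset.cons_swap _ _ _]
    rw [FF_double hNR e M _ (by simp; omega), FF_const hNR e (M + 1) _ (by simp; omega), Pd_cons,
      Pd_single]
    push_cast
    ring
  have h1 : ∀ i ∈ Finset.range 2, ∑ j ∈ Finset.range 3,
      FF (NR k) (2 ^ (e + 1)) (M + 1) {(2 ^ (e + 1) - j + 2) / 3, (2 ^ (e + 1) - i + 1) / 2} =
      2 * 2 ^ e * (((2 : ℝ) ^ (e + 1)) ^ (2 * M + 1) * 2 ^ e +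
        2 ^ M * ((2 : ℝ) ^ e) ^ (2 * (M + 1))) := by
    intro i hi
    rw [Finset.mem_range] at hi
    rw [show (2 ^ (e + 1) - i + 1) / 2 = 2 ^ e by rw [pow_succ]; omega]
    simp only [Finset.sum_range_succ, Finset.sum_range_zero, zero_add]
    rw [hstep _ (by rw [pow_succ]; omega), hstep _ (by rw [pow_succ]; omega),
      hstep _ (by rw [pow_succ]; omega), ← add_mul, ← add_mul]
    congr 1
    have hsum : (2 ^ (e + 1) - 0 + 2) / 3 + (2 ^ (e + 1) - 1 + 2) / 3
      + (2 ^ (e + 1) - 2 + 2) / 3 = 2 * 2 ^ e := by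
      rw [pow_succ]; exact third_sum _ hq
    rw [← Nat.cast_add, ← Nat.cast_add, hsum]
    push_cast
    rfl
  rw [Finset.sum_congr rfl h1]
  simp only [Finset.sum_const, Finset.card_range, nsmul_eq_mul]
  push_cast
  rw [show (2 * (M + 1) + 1) * (e + 1) = (2 * (M + 1) + 1) * e + (M + 2) + (M + 1) by ring]
  simp only [pow_add, ← pow_mul]
  field_simp
  ring
end


/-- In characteristic 2, the Hilbert–Kunz multiplicities of the `A₁` and `A₂` singularities
exist and `e_HK(S_{2,d}) > e_HK(R_{2,d})`. -/
theorem eHK_A2_gt_A1_char_two (k : Type*) [Field k] [CharP k 2] (d : ℕ) (hd : 2 ≤ d) :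
    ∃ L_R L_S : ℝ,
      Filter.Tendsto
        (fun e : ℕ => (HKfun k (d + 1) 2 e (A1poly k d) : ℝ) / 2 ^ (d * e))
        Filter.atTop (nhds L_R) ∧
      Filter.Tendsto
        (fun e : ℕ => (HKfun k (d + 1) 2 e (A2poly k d) : ℝ) / 2 ^ (d * e))
        Filter.atTop (nhds L_S) ∧
      L_S > L_R := by
  obtain ⟨M, hM⟩ | ⟨M, hM⟩ : (∃ M, d = 2 * (M + 1)) ∨ ∃ M, d = 2 * (M + 1) + 1 := by
    rcases Nat.even_or_odd' d with ⟨c, h | h⟩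
    · exact Or.inl ⟨c - 1, by omega⟩
    · exact Or.inr ⟨c - 1, by omega⟩
  · refine ⟨_, _, lim_A1_even M d hM, lim_A2_even M d hM, ?_⟩
    have h4 : (1 : ℝ) / 2 ^ (M + 1) = 2 * (1 / 2 ^ (M + 2)) := by
      rw [pow_succ _ (M + 1)]; field_simp
    have h5 : (0 : ℝ) < 1 / 2 ^ (M + 2) := by positivity
    have h6 : (1 : ℝ) / 2 ^ (M + 2) < 1 := by
      rw [div_lt_one (by positivity)]
      exact one_lt_pow₀ (by norm_num) (by omega)
    rw [h4]
    generalize (1 : ℝ) / 2 ^ (M + 2) = B at *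
    rw [gt_iff_lt, lt_div_iff₀ (by linarith)]
    nlinarith
  · refine ⟨_, _, lim_A1_odd (M + 1) d (by omega), lim_A2_odd M d hM, ?_⟩
    have h4 : (1 : ℝ) / 2 ^ (M + 1) = 2 * (1 / 2 ^ (M + 2)) := by
      rw [pow_succ _ (M + 1)]; field_simp
    have h5 : (0 : ℝ) < 1 / 2 ^ (M + 2) := by positivity
    have h6 : (1 : ℝ) / 2 ^ (M + 1) < 1 := by
      rw [div_lt_one (by positivity)]
      exact one_lt_pow₀ (by norm_num) (by omega)
    rw [h4] at h6 ⊢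
    rw [show M + 1 + 1 = M + 2 from rfl]
    generalize (1 : ℝ) / 2 ^ (M + 2) = B at *
    rw [gt_iff_lt, div_lt_iff₀ (by linarith)]
    nlinarith
end
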